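/- arXiv:1705.08539 — 9 statements merged into one kernel-verified Lean document; each statement's English description precedes it below -/
import Mathlib

section
/- Let 1 ≤ d ≤ n−1 and let 𝓕 be a d-separating family of subsets of [n]. Then the dual family {𝓕_a : a ∈ [n]} is d-union-free. -/
/-- The dual family `{𝓕_a : a ∈ [n]}` of a family `𝓕` of subsets of `[n]`, where
`𝓕_a = {F ∈ 𝓕 : a ∈ F}`. -/
def dualFam {n : ℕ} (𝓕 : Finset (Finset (Fin n))) : Finset (Finset (Finset (Fin n))) :=
  Finset.univ.image (fun a : Fin n => 𝓕.filter (fun F => a ∈ F))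

/-!
A member `F` of `𝓕` lies in the union of the `𝓕_a` with `a ∈ X` exactly when `F` meets `X`. Hence
`d`-separation says that a `d`-set `X` is determined by this union. Since `d` distinct members of
the dual are the `𝓕_a` of some `d`-set `X`, their union determines `X`, and so the members.
-/

/-- A `d`-separating family of subsets of `α`. The subsets are terms of a set-like type `A`, so
that `Set α` and `Finset α` are both covered. -/
def IsSeparating {α A : Type*} [SetLike A α] (d : ℕ) (𝓕 : Set A) : Prop :=
  ∀ X Y : Finset α, X.card = d → Y.card = d → X ≠ Y →
    ∃ F ∈ 𝓕, Xor (∃ a ∈ F, a ∈ X) (∃ a ∈ F, a ∈ Y)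

/-- A `d`-union-free set, with unions read as joins in a semilattice, so that families of sets
and families of finsets are both covered. Sets of `d` distinct members are encoded as
injective maps from `Fin d`, compared through their ranges. -/
def IsUnionFree {β : Type*} [SemilatticeSup β] [OrderBot β] (d : ℕ) (S : Set β) : Prop :=
  ∀ G H : Fin d → β, Function.Injective G → Function.Injective H →
    (∀ i, G i ∈ S) → (∀ i, H i ∈ S) →
    Finset.univ.sup G = Finset.univ.sup H → Set.range G = Set.range H

/-- The subfamily `𝓕_a` of the members of `𝓕` that contain `a`. -/
def membersContaining {α A : Type*} [SetLike A α] (𝓕 : Set A) (a : α) : Set A :=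
  {F ∈ 𝓕 | a ∈ F}

section Lattice

variable {α β γ : Type*} [SemilatticeSup β] [OrderBot β] [SemilatticeSup γ] [OrderBot γ] {d : ℕ}

theorem isUnionFree_range_of_injOn_sup {f : α → β}
    (hf : Set.InjOn (fun X : Finset α => X.sup f) {X | X.card = d}) :
    IsUnionFree d (Set.range f) := by
  intro G H hG hH hGf hHf hsup
  choose a ha using hGf
  choose b hb using hHf
  obtain rfl : f ∘ a = G := funext ha
  obtain rfl : f ∘ b = H := funext hb
  have hab : Finset.univ.map ⟨a, hG.of_comp⟩ = Finset.univ.map ⟨b, hH.of_comp⟩ :=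
    hf (by simp) (by simp) (by simpa [Finset.sup_map] using hsup)
  have hrange : Set.range a = Set.range b := by
    simpa using congrArg (fun X : Finset α => (X : Set α)) hab
  rw [Set.range_comp, Set.range_comp, hrange]

theorem IsUnionFree.of_image {S : Set β} (e : SupBotHom β γ) (he : Function.Injective e)
    (h : IsUnionFree d (e '' S)) : IsUnionFree d S := by
  intro G H hG hH hGS hHS hsup
  have hrange : Set.range (e ∘ G) = Set.range (e ∘ H) :=
    h _ _ (he.comp hG) (he.comp hH) (fun i => Set.mem_image_of_mem e (hGS i))
      (fun i => Set.mem_image_of_mem e (hHS i))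
      (by rw [← map_finset_sup, ← map_finset_sup, hsup])
  rwa [Set.range_comp, Set.range_comp, he.image_injective.eq_iff] at hrange

end Lattice

section Dual

variable {α A : Type*} [SetLike A α] {d : ℕ} {𝓕 : Set A}

theorem mem_sup_membersContaining {X : Finset α} {F : A} :
    F ∈ X.sup (membersContaining 𝓕) ↔ F ∈ 𝓕 ∧ ∃ a ∈ F, a ∈ X := by
  simp only [Finset.sup_set_eq_biUnion, membersContaining, Set.mem_iUnion, Set.mem_ofPred_eq]
  tauto

theorem IsSeparating.injOn_sup_membersContaining (h : IsSeparating d 𝓕) :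
    Set.InjOn (fun X : Finset α => X.sup (membersContaining 𝓕)) {X | X.card = d} := by
  intro X hX Y hY hsup
  by_contra hne
  obtain ⟨F, hF, hXY⟩ := h X Y hX hY hne
  have hmeets : (∃ a ∈ F, a ∈ X) ↔ ∃ a ∈ F, a ∈ Y := by
    simpa only [mem_sup_membersContaining, hF, true_and] using Set.ext_iff.mp hsup F
  exact (xor_iff_not_iff _ _).mp hXY hmeets

theorem dual_of_dSeparating_is_dUnionFree_general (h : IsSeparating d 𝓕) :
    IsUnionFree d (Set.range (membersContaining 𝓕)) :=
  isUnionFree_range_of_injOn_sup h.injOn_sup_membersContaining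

end Dual

theorem isSeparating_coe_iff {α : Type*} [DecidableEq α] {d : ℕ} {𝓕 : Finset (Finset α)} :
    IsSeparating d (𝓕 : Set (Finset α)) ↔
      ∀ X Y : Finset α, X.card = d → Y.card = d → X ≠ Y →
        ∃ F ∈ 𝓕, ((F ∩ X).Nonempty ∧ ¬ (F ∩ Y).Nonempty) ∨
          ((F ∩ Y).Nonempty ∧ ¬ (F ∩ X).Nonempty) := by
  simp only [IsSeparating, Xor, Finset.Nonempty, Finset.mem_inter, Finset.mem_coe]

/-- The coercion from finsets to sets as a homomorphism, used to pull union-freeness back from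
families of sets to families of finsets. -/
def finsetCoeSupBotHom (α : Type*) [DecidableEq α] : SupBotHom (Finset α) (Set α) where
  toFun := (↑)
  map_sup' := Finset.coe_union
  map_bot' := Finset.coe_empty

section Fin

variable {n d : ℕ} {𝓕 : Finset (Finset (Fin n))}

theorem finsetCoeSupBotHom_image_dualFam :
    finsetCoeSupBotHom (Finset (Fin n)) '' (dualFam 𝓕 : Set (Finset (Finset (Fin n)))) =
      Set.range (membersContaining (𝓕 : Set (Finset (Fin n)))) := by
  simp only [dualFam, Finset.coe_image, Finset.coe_univ, Set.image_univ, ← Set.range_comp]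
  congr 1
  ext a F
  simp [finsetCoeSupBotHom, membersContaining]

theorem IsSeparating.isUnionFree_dualFam (h : IsSeparating d (𝓕 : Set (Finset (Fin n)))) :
    IsUnionFree d (dualFam 𝓕 : Set (Finset (Finset (Fin n)))) :=
  .of_image (finsetCoeSupBotHom _) Finset.coe_injective <|
    finsetCoeSupBotHom_image_dualFam ▸ dual_of_dSeparating_is_dUnionFree_general h

end Fin

/-- the dual of a `d`-separating family (with `1 ≤ d ≤ n-1`) is `d`-union-free. -/
theorem dual_of_dSeparating_is_dUnionFree (n d : ℕ) (hd : 1 ≤ d) (hdn : d ≤ n - 1)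
    (𝓕 : Finset (Finset (Fin n)))
    (hsep : ∀ X Y : Finset (Fin n), X.card = d → Y.card = d → X ≠ Y →
      ∃ F ∈ 𝓕, ((F ∩ X).Nonempty ∧ ¬ (F ∩ Y).Nonempty) ∨
        ((F ∩ Y).Nonempty ∧ ¬ (F ∩ X).Nonempty)) :
    ∀ G H : Fin d → Finset (Finset (Fin n)),
      Function.Injective G → Function.Injective H →
      (∀ i, G i ∈ dualFam 𝓕) → (∀ i, H i ∈ dualFam 𝓕) →
      Finset.univ.sup G = Finset.univ.sup H →
      Finset.image G Finset.univ = Finset.image H Finset.univ := by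
  intro G H hG hH hGd hHd hsup
  have hrange := (isSeparating_coe_iff.mpr hsep).isUnionFree_dualFam G H hG hH hGd hHd hsup
  exact Finset.coe_injective (by simpa using hrange)
end

section
/- Let d ≥ 1, n ≥ d+1, and let 𝓕 be a family of subsets of [n] such that the sets 𝓕_a (a ∈ [n]) are pairwise distinct. Then the following are equivalent: (i) for every x ∈ [n] and every D ⊆ [n] with |D| = d and x ∉ D there exists F ∈ 𝓕 with x ∈ F and F ∩ D = ∅; (ii) the dual family {𝓕_a : a ∈ [n]} is d-cover-free. (Condition (i) expresses that in the group testing model every element always finds out whether it is defective; this is Model 1_d.) -/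
section CoverFree

open Set Function

variable {α β γ : Type*} [SetLike γ β] {d : ℕ}

/-- A family `𝓖` of sets is `d`-cover-free if no member is contained in the union of `d` others.
The members are terms of a `SetLike` type, so that families of finsets and of sets are both covered,
and the `d + 1` distinct members are listed by an injective tuple with the covered one last. -/
def IsCoverFree (d : ℕ) (𝓖 : Set γ) : Prop :=
  ∀ G : Fin (d + 1) → γ, Injective G → (∀ i, G i ∈ 𝓖) →
    ¬ (G (Fin.last d) : Set β) ⊆ ⋃ i : Fin d, (G i.castSucc : Set β)

theorem isCoverFree_iff_not_exists_subset_sup [DecidableEq β] {𝓖 : Set (Finset β)} :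
    IsCoverFree d 𝓖 ↔ ¬ ∃ G : Fin (d + 1) → Finset β, Injective G ∧ (∀ i, G i ∈ 𝓖) ∧
      G (Fin.last d) ⊆ (Finset.univ : Finset (Fin d)).sup fun i => G i.castSucc := by
  have subset_sup_iff (s : Finset β) (t : Fin d → Finset β) :
      s ⊆ Finset.univ.sup t ↔ (s : Set β) ⊆ ⋃ i, (t i : Set β) := by
    simp only [Finset.subset_iff, Finset.mem_sup, Finset.mem_univ, true_and, Set.subset_def,
      Finset.mem_coe, mem_iUnion]
  simp only [IsCoverFree, subset_sup_iff, not_exists, not_and]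

theorem isCoverFree_range_iff {A : α → γ} (hA : Injective A) :
    IsCoverFree d (range A) ↔ ∀ a : Fin (d + 1) → α, Injective a →
      ¬ (A (a (Fin.last d)) : Set β) ⊆ ⋃ i : Fin d, (A (a i.castSucc) : Set β) := by
  constructor
  · exact fun h a ha => h (A ∘ a) (hA.comp ha) fun i => mem_range_self (a i)
  · intro h G hG hGA
    choose a ha using hGA
    obtain rfl : A ∘ a = G := funext ha
    exact h a hG.of_comp

theorem forall_injective_fin_succ_iff {P : α → Set α → Prop} :
    (∀ a : Fin (d + 1) → α, Injective a →
        P (a (Fin.last d)) (range fun i : Fin d => a i.castSucc)) ↔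
      ∀ x, ∀ D : Finset α, D.card = d → x ∉ D → P x D := by
  constructor
  · rintro h x D rfl hx
    let e : Fin D.card → α := fun i => D.equivFin.symm i
    have he : Injective e := Subtype.val_injective.comp D.equivFin.symm.injective
    have range_e : range e = D :=
      (D.equivFin.symm.surjective.range_comp Subtype.val).trans Subtype.range_coe
    have hsnoc : Injective (Fin.snoc e x : Fin (D.card + 1) → α) :=
      Fin.snoc_injective_iff.2 ⟨he, by rwa [range_e]⟩
    simpa only [Fin.snoc_last, Fin.snoc_castSucc, range_e] using h _ hsnoc
  · intro h a ha
    have hinit : Injective fun i : Fin d => a i.castSucc := ha.comp (Fin.castSucc_injective d)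
    simpa using h (a (Fin.last d)) (Finset.univ.map ⟨_, hinit⟩) (by simp)
      (by simp [ha.eq_iff, Fin.castSucc_ne_last])

-- Here `b ∈ A x` says that the query `b` contains the element `x`, so that `A x` plays `𝓕_x`.
theorem model1d_iff_dual_coverFree_general {A : α → γ} (hA : Injective A) :
    (∀ x, ∀ D : Finset α, D.card = d → x ∉ D → ∃ b ∈ A x, ∀ a ∈ D, b ∉ A a) ↔
      IsCoverFree d (range A) := by
  have h := forall_injective_fin_succ_iff (d := d)
    (P := fun x D => ¬ (A x : Set β) ⊆ ⋃ a ∈ D, (A a : Set β))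
  simp only [biUnion_range] at h
  rw [isCoverFree_range_iff hA, h]
  simp only [not_subset, mem_iUnion, SetLike.mem_coe, not_exists, exists_prop, not_and]

end CoverFree

theorem coe_dualFam {n : ℕ} (𝓕 : Finset (Finset (Fin n))) :
    (dualFam 𝓕 : Set (Finset (Finset (Fin n)))) = Set.range fun a => 𝓕.filter (a ∈ ·) := by
  simp only [dualFam, Finset.coe_image, Finset.coe_univ, Set.image_univ]

theorem exists_mem_filter_forall_notMem_filter_iff {α : Type*} [DecidableEq α]
    (𝓕 : Finset (Finset α)) (x : α) (D : Finset α) :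
    (∃ F ∈ 𝓕.filter (x ∈ ·), ∀ a ∈ D, F ∉ 𝓕.filter (a ∈ ·)) ↔
      ∃ F ∈ 𝓕, x ∈ F ∧ F ∩ D = ∅ := by
  simp only [Finset.mem_filter, and_assoc, ← Finset.disjoint_iff_inter_eq_empty,
    Finset.disjoint_right]
  exact exists_congr fun F => and_congr_right fun hF => by simp only [hF, true_and]

/-- for `d ≥ 1`, `n ≥ d+1` and a family `𝓕` with pairwise distinct `𝓕_a`,
every element always finds out whether it is defective (Model 1_d, i.e. for every `x` and
every `d`-set `D` avoiding `x` there is a query containing `x` and disjoint from `D`) iff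
the dual family is `d`-cover-free. -/
theorem model1d_iff_dual_coverFree (n d : ℕ) (hd : 1 ≤ d) (hn : d + 1 ≤ n)
    (𝓕 : Finset (Finset (Fin n)))
    (hdist : ∀ a b : Fin n,
      𝓕.filter (fun F => a ∈ F) = 𝓕.filter (fun F => b ∈ F) → a = b) :
    (∀ x : Fin n, ∀ D : Finset (Fin n), D.card = d → x ∉ D →
      ∃ F ∈ 𝓕, x ∈ F ∧ F ∩ D = ∅) ↔
    ¬ ∃ G : Fin (d + 1) → Finset (Finset (Fin n)),
      Function.Injective G ∧
      (∀ i, G i ∈ dualFam 𝓕) ∧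
      G (Fin.last d) ⊆ (Finset.univ : Finset (Fin d)).sup (fun i => G i.castSucc) := by
  simpa only [← coe_dualFam, exists_mem_filter_forall_notMem_filter_iff,
    isCoverFree_iff_not_exists_subset_sup, Finset.mem_coe] using
    model1d_iff_dual_coverFree_general (d := d) (A := fun a => 𝓕.filter (a ∈ ·)) hdist
end

section
/- Let d ≥ 1 and let 𝓕 be a family of subsets of [n] satisfying both: (Model 1_d) for every x ∈ [n] and every D ⊆ [n] with |D| = d and x ∉ D there exists F ∈ 𝓕 with x ∈ F and F ∩ D = ∅; and (Model 2'_d) for every x ∈ [n], every D ⊆ [n] with |D| = d and x ∉ D, and every D' ⊆ [n] with |D'| = d and D' ≠ D, there exists F ∈ 𝓕 with x ∈ F such that exactly one of F ∩ D and F ∩ D' is nonempty. Then 𝓕 satisfies •1 (for any two distinct X, Y ⊆ [n] with |X| = |Y| = d there exists F ∈ 𝓕 with F ∩ X ≠ ∅ and F ∩ Y = ∅) and •2 (for any three pairwise distinct X, Y, Z ⊆ [n] with |X| = |Y| = |Z| = d there exists F ∈ 𝓕 with either (F ∩ X ≠ ∅, F ∩ Y ≠ ∅ and F ∩ Z = ∅)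 or (F ∩ X ≠ ∅, F ∩ Z ≠ ∅ and F ∩ Y = ∅)); that is, 𝓕 solves Model 2''_d. -/
/-! Two distinct possible defective sets never contain one another, so some `x ∈ X` lies outside
`Y`. If `Y` were the defective set, the non-defective `x` could tell it from any `Z ≠ Y`, so some
query through `x`, which automatically meets `X`, meets exactly one of `Y` and `Z`. This is •2.
Taking `Z = X` gives •1: the query meets `X`, so it must be `Y` that it misses. -/

section

variable {α : Type*} [DecidableEq α] {𝓕 𝒟 : Set (Finset α)} {X Y Z : Finset α}

/-- Model 2' of group testing with queries `𝓕`, where the possible defective sets are the members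
of an arbitrary collection `𝒟` instead of all `d`-sets: whenever `D ∈ 𝒟` is the defective set, each
`x ∉ D` can exclude every other `D' ∈ 𝒟` from the answers to the queries containing `x`. -/
def NondefectivesIdentify (𝓕 𝒟 : Set (Finset α)) : Prop :=
  ∀ x, ∀ D : Finset α, D ∈ 𝒟 → x ∉ D → ∀ D' : Finset α, D' ∈ 𝒟 → D' ≠ D →
    ∃ F ∈ 𝓕, x ∈ F ∧ Xor (F ∩ D).Nonempty (F ∩ D').Nonempty

namespace NondefectivesIdentify

theorem exists_inter_nonempty_and_xor (h : NondefectivesIdentify 𝓕 𝒟)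
    (h𝒟 : IsAntichain (· ⊆ ·) 𝒟) (hX : X ∈ 𝒟) (hY : Y ∈ 𝒟) (hZ : Z ∈ 𝒟)
    (hXY : X ≠ Y) (hYZ : Y ≠ Z) :
    ∃ F ∈ 𝓕, (F ∩ X).Nonempty ∧ Xor (F ∩ Y).Nonempty (F ∩ Z).Nonempty := by
  obtain ⟨x, hxX, hxY⟩ := Finset.not_subset.mp (h𝒟 hX hY hXY)
  obtain ⟨F, hF, hxF, hYZF⟩ := h x Y hY hxY Z hZ hYZ.symm
  exact ⟨F, hF, ⟨x, Finset.mem_inter_of_mem hxF hxX⟩, hYZF⟩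

theorem exists_inter_nonempty_and_inter_eq_empty (h : NondefectivesIdentify 𝓕 𝒟)
    (h𝒟 : IsAntichain (· ⊆ ·) 𝒟) (hX : X ∈ 𝒟) (hY : Y ∈ 𝒟) (hXY : X ≠ Y) :
    ∃ F ∈ 𝓕, (F ∩ X).Nonempty ∧ F ∩ Y = ∅ := by
  obtain ⟨F, hF, hFX, ⟨-, hnFX⟩ | ⟨-, hnFY⟩⟩ :=
    h.exists_inter_nonempty_and_xor h𝒟 hX hY hX hXY hXY.symm
  · exact absurd hFX hnFX
  · exact ⟨F, hF, hFX, Finset.not_nonempty_iff_eq_empty.mp hnFY⟩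

end NondefectivesIdentify

theorem model1d_and_model2dprime_implies_model2dsecond_general
    (h : NondefectivesIdentify 𝓕 𝒟) (h𝒟 : IsAntichain (· ⊆ ·) 𝒟) :
    (∀ X Y : Finset α, X ∈ 𝒟 → Y ∈ 𝒟 → X ≠ Y →
      ∃ F ∈ 𝓕, (F ∩ X).Nonempty ∧ F ∩ Y = ∅) ∧
    (∀ X Y Z : Finset α, X ∈ 𝒟 → Y ∈ 𝒟 → Z ∈ 𝒟 → X ≠ Y → Y ≠ Z →
      ∃ F ∈ 𝓕, ((F ∩ X).Nonempty ∧ (F ∩ Y).Nonempty ∧ F ∩ Z = ∅) ∨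
        ((F ∩ X).Nonempty ∧ (F ∩ Z).Nonempty ∧ F ∩ Y = ∅)) := by
  refine ⟨fun X Y hX hY hXY ↦ h.exists_inter_nonempty_and_inter_eq_empty h𝒟 hX hY hXY,
    fun X Y Z hX hY hZ hXY hYZ ↦ ?_⟩
  obtain ⟨F, hF, hFX, hYZF⟩ := h.exists_inter_nonempty_and_xor h𝒟 hX hY hZ hXY hYZ
  simp only [Xor, Finset.not_nonempty_iff_eq_empty] at hYZF
  exact ⟨F, hF, hYZF.imp (⟨hFX, ·⟩) (⟨hFX, ·⟩)⟩

end

/-- if `𝓕` satisfies Model 1_d (every `x` and `d`-set `D` avoiding `x` admit a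
query containing `x` disjoint from `D`) and Model 2'_d (every non-defective element can
identify the defectives), then `𝓕` satisfies •1 and •2, i.e. it solves Model 2''_d. -/
theorem model1d_and_model2dprime_implies_model2dsecond (n d : ℕ) (hd : 1 ≤ d)
    (𝓕 : Finset (Finset (Fin n)))
    (hmodel1 : ∀ x : Fin n, ∀ D : Finset (Fin n), D.card = d → x ∉ D →
      ∃ F ∈ 𝓕, x ∈ F ∧ F ∩ D = ∅)
    (hmodel2 : ∀ x : Fin n, ∀ D : Finset (Fin n), D.card = d → x ∉ D →
      ∀ D' : Finset (Fin n), D'.card = d → D' ≠ D →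
        ∃ F ∈ 𝓕, x ∈ F ∧
          (((F ∩ D).Nonempty ∧ ¬ (F ∩ D').Nonempty) ∨
            ((F ∩ D').Nonempty ∧ ¬ (F ∩ D).Nonempty))) :
    (∀ X Y : Finset (Fin n), X.card = d → Y.card = d → X ≠ Y →
      ∃ F ∈ 𝓕, (F ∩ X).Nonempty ∧ F ∩ Y = ∅) ∧
    (∀ X Y Z : Finset (Fin n), X.card = d → Y.card = d → Z.card = d →
      X ≠ Y → X ≠ Z → Y ≠ Z →
      ∃ F ∈ 𝓕, ((F ∩ X).Nonempty ∧ (F ∩ Y).Nonempty ∧ F ∩ Z = ∅) ∨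
        ((F ∩ X).Nonempty ∧ (F ∩ Z).Nonempty ∧ F ∩ Y = ∅)) := by
  have h : NondefectivesIdentify (𝓕 : Set (Finset (Fin n))) (Set.powersetCard (Fin n) d) := hmodel2
  have h𝒟 : (Set.powersetCard (Fin n) d).Sized d := fun _ ↦ id
  have ⟨h₁, h₂⟩ := model1d_and_model2dprime_implies_model2dsecond_general h h𝒟.isAntichain
  exact ⟨h₁, fun X Y Z hX hY hZ hXY _ ↦ h₂ X Y Z hX hY hZ hXY⟩
end

section
/- For every d-element subset X ⊆ [n], say that X resolves the defectives if for any two distinct D, D' ⊆ [n] with |D| = |D'| = d there exists F ∈ 𝓕 with F ∩ X ≠ ∅ such that exactly one of F ∩ D and F ∩ D' is nonempty. Then a family 𝓕 of subsets of [n] has the property that every d-element subset X ⊆ [n] resolves the defectives if and only if 𝓕 satisfies both •1 (for any two distinct X, Y ⊆ [n] with |X| = |Y| = d there exists F ∈ 𝓕 with F ∩ X ≠ ∅ and F ∩ Y = ∅) and •2 (for any three pairwise distinct X, Y, Z ⊆ [n] with |X| = |Y| = |Z| = d there exists F ∈ 𝓕 with either (F ∩ X ≠ ∅, F ∩ Y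 ≠ ∅ and F ∩ Z = ∅) or (F ∩ X ≠ ∅, F ∩ Z ≠ ∅ and F ∩ Y = ∅)). -/
/-!
Fix the set `X` of observers and split the pairs `D ≠ D'` according to whether `X` is one of them.
Every query seen by `X` is answered YES for `X`, so distinguishing `X` from `Y` means hitting `X`
and missing `Y`, which is •1; the pairs avoiding `X` give •2.
-/

namespace GroupTesting

variable {Q C : Type*}

/-- Some query of `𝓕` seen by `X` has different answers for the candidates `D` and `D'`. Here
`pos F D` says that the query `F` is answered YES for `D`, and `X` sees `F` exactly when `pos F X`;
in group testing `pos F D` is `(F ∩ D).Nonempty`. -/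
def Distinguishes (pos : Q → C → Prop) (𝓕 : Set Q) (X D D' : C) : Prop :=
  ∃ F ∈ 𝓕, pos F X ∧ Xor (pos F D) (pos F D')

/-- `X` can identify the true candidate in `𝓒` from the answers to the queries of `𝓕` it sees. -/
def Resolves (pos : Q → C → Prop) (𝓕 : Set Q) (𝓒 : Set C) (X : C) : Prop :=
  𝓒.Pairwise (Distinguishes pos 𝓕 X)

variable {pos : Q → C → Prop} {𝓕 : Set Q} {𝓒 : Set C} {X Y : C}

instance Distinguishes.symm : Std.Symm (Distinguishes pos 𝓕 X) where
  symm _ _ := fun ⟨F, hF, hX, hxor⟩ => ⟨F, hF, hX, hxor.symm⟩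

theorem distinguishes_self_left_iff :
    Distinguishes pos 𝓕 X X Y ↔ ∃ F ∈ 𝓕, pos F X ∧ ¬ pos F Y :=
  exists_congr fun _ => and_congr_right fun _ => and_congr_right fun hX => by
    simp only [hX, Xor, true_and, not_true, and_false, or_false]

theorem resolves_iff_of_mem (hX : X ∈ 𝓒) :
    Resolves pos 𝓕 𝓒 X ↔
      (∀ Y ∈ 𝓒, X ≠ Y → ∃ F ∈ 𝓕, pos F X ∧ ¬ pos F Y) ∧
        (𝓒 \ {X}).Pairwise (Distinguishes pos 𝓕 X) := by
  have hX_notMem : X ∉ 𝓒 \ {X} := Set.notMem_sdiff_of_mem rfl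
  conv_lhs => rw [Resolves, ← Set.insert_sdiff_self_of_mem hX]
  rw [Set.pairwise_insert_of_symm_of_notMem hX_notMem, and_comm]
  simp only [distinguishes_self_left_iff, Set.mem_sdiff_singleton, ne_comm, and_imp]

end GroupTesting

theorem resolves_iff_bullet1_and_bullet2_general {Q C : Type*} (pos : Q → C → Prop) (𝓕 : Set Q)
    (𝓒 : Set C) :
    (∀ X ∈ 𝓒, GroupTesting.Resolves pos 𝓕 𝓒 X) ↔
      (∀ X Y, X ∈ 𝓒 → Y ∈ 𝓒 → X ≠ Y → ∃ F ∈ 𝓕, pos F X ∧ ¬ pos F Y) ∧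
        ∀ X Y Z, X ∈ 𝓒 → Y ∈ 𝓒 → Z ∈ 𝓒 → X ≠ Y → X ≠ Z → Y ≠ Z →
          ∃ F ∈ 𝓕, (pos F X ∧ pos F Y ∧ ¬ pos F Z) ∨ (pos F X ∧ pos F Z ∧ ¬ pos F Y) := by
  simp only [← and_or_left]
  rw [forall₂_congr fun _ => GroupTesting.resolves_iff_of_mem, forall₂_and]
  exact and_congr
    ⟨fun h X Y hX hY => h X hX Y hY, fun h X hX Y hY => h X Y hX hY⟩
    ⟨fun h X Y Z hX hY hZ hXY hXZ => h X hX ⟨hY, hXY.symm⟩ ⟨hZ, hXZ.symm⟩,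
      fun h X hX Y hY Z hZ => h X Y Z hX hY.1 hZ.1 (Ne.symm hY.2) (Ne.symm hZ.2)⟩

/-- every `d`-element subset `X ⊆ [n]` resolves the defectives (any two
distinct `d`-sets `D, D'` are distinguished by a query meeting `X`) iff `𝓕` satisfies both
•1 and •2. -/
theorem resolves_iff_bullet1_and_bullet2 (n d : ℕ) (𝓕 : Finset (Finset (Fin n))) :
    (∀ X : Finset (Fin n), X.card = d →
      ∀ D D' : Finset (Fin n), D.card = d → D'.card = d → D ≠ D' →
        ∃ F ∈ 𝓕, (F ∩ X).Nonempty ∧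
          (((F ∩ D).Nonempty ∧ ¬ (F ∩ D').Nonempty) ∨
            ((F ∩ D').Nonempty ∧ ¬ (F ∩ D).Nonempty))) ↔
    ((∀ X Y : Finset (Fin n), X.card = d → Y.card = d → X ≠ Y →
        ∃ F ∈ 𝓕, (F ∩ X).Nonempty ∧ F ∩ Y = ∅) ∧
      (∀ X Y Z : Finset (Fin n), X.card = d → Y.card = d → Z.card = d →
        X ≠ Y → X ≠ Z → Y ≠ Z →
        ∃ F ∈ 𝓕, ((F ∩ X).Nonempty ∧ (F ∩ Y).Nonempty ∧ F ∩ Z = ∅) ∨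
          ((F ∩ X).Nonempty ∧ (F ∩ Z).Nonempty ∧ F ∩ Y = ∅))) := by
  simp only [← Finset.not_nonempty_iff_eq_empty]
  have hiff := resolves_iff_bullet1_and_bullet2_general
    (fun F D : Finset (Fin n) => (F ∩ D).Nonempty) 𝓕 {D | D.card = d}
  exact ⟨fun h => hiff.1 fun X hX D hD D' hD' => h X hX D D' hD hD',
    fun h X hX D D' hD hD' => hiff.2 h X hX hD hD'⟩
end

section
/- Let d ≥ 2, r ≥ 3 and n ≥ dr+2. Let 𝓕 be a family of subsets of [n] such that every F ∈ 𝓕 has |F| = r, every x ∈ [n] belongs to exactly d members of 𝓕, any two distinct members of 𝓕 intersect in at most one element, and 𝓕 contains no Berge cycle of length 3 or 4 (i.e. there are no three pairwise distinct E_1, E_2, E_3 ∈ 𝓕 and pairwise distinct x_1, x_2, x_3 ∈ [n] with x_1, x_2 ∈ E_1, x_2, x_3 ∈ E_2, x_3, x_1 ∈ E_3, and no four pairwise distinct E_1, E_2, E_3, E_4 ∈ 𝓕 and pairwise distinct x_1, x_2, x_3, x_4 ∈ [n] with x_1, x_2 ∈ E_1, x_2, x_3 ∈ E_2, x_3, x_4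 ∈ E_3, x_4, x_1 ∈ E_4). Then 𝓕 is d-separating and satisfies: for every x ∈ [n], every D ⊆ [n] with |D| = d and every y ∈ D, there exists D' ⊆ [n] with |D'| = d and y ∉ D' such that every F ∈ 𝓕 with x ∈ F satisfies F ∩ D ≠ ∅ if and only if F ∩ D' ≠ ∅. (That is, 𝓕 solves Model 3_d: Questioner can identify the defectives but no single element can identify any of them.) -/
/-!
Suppose `X ≠ Y` have at most `d` elements and receive the same answers, and let `x ∈ X \ Y`. By
linearity the `d` queries through `x` have disjoint traces on `Y`, and all these traces are
nonempty. Hence each of them is a single point and together they cover `Y`: every point of `Y` lies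
on a query with `x`. In particular `d ≤ |Y|`, so `Y` is not contained in `X` and the same holds with
`X` and `Y` exchanged. Hence a common point of `X` and `Y` yields a Berge triangle, while disjoint
`X` and `Y` yield a Berge 4-cycle; the queries on these cycles are distinct because the traces are
single points.

To conceal a defective `y` from `x`, pick a point other than `x` and `y` on each query through `x`
answered YES. By linearity these points lie on no other query through `x`, and they can be completed
to `d` points by means of points other than `y` lying on no query through `x` at all.
-/

section

open Finset

variable {V : Type*} {𝓕 : Finset (Finset V)} {X Y D F G : Finset V}
  {d : ℕ} {x y z w : V}

/-- Collinearity: some member of the family contains both points. Every point on a member is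
collinear with itself. -/
def AreCollinear (𝓕 : Finset (Finset V)) (x y : V) : Prop := ∃ F ∈ 𝓕, x ∈ F ∧ y ∈ F

/-- Existence of a Berge cycle of length `k`, with vertices `x i` and edges `E i` indexed
cyclically by `Fin k`. The usual notion for `2 ≤ k`; a cycle of length `1` is a nonempty edge. -/
def HasBergeCycle (𝓕 : Finset (Finset V)) (k : ℕ) [NeZero k] : Prop :=
  ∃ (E : Fin k → Finset V) (x : Fin k → V), E.Injective ∧ x.Injective ∧
    ∀ i, E i ∈ 𝓕 ∧ x i ∈ E i ∧ x (i + 1) ∈ E i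

theorem AreCollinear.symm (h : AreCollinear 𝓕 x y) : AreCollinear 𝓕 y x := by
  obtain ⟨F, hF, hx, hy⟩ := h
  exact ⟨F, hF, hy, hx⟩

theorem hasBergeCycle_three_iff :
    HasBergeCycle 𝓕 3 ↔ ∃ (E₁ E₂ E₃ : Finset V) (x₁ x₂ x₃ : V),
      E₁ ∈ 𝓕 ∧ E₂ ∈ 𝓕 ∧ E₃ ∈ 𝓕 ∧
      E₁ ≠ E₂ ∧ E₁ ≠ E₃ ∧ E₂ ≠ E₃ ∧
      x₁ ≠ x₂ ∧ x₁ ≠ x₃ ∧ x₂ ≠ x₃ ∧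
      x₁ ∈ E₁ ∧ x₂ ∈ E₁ ∧ x₂ ∈ E₂ ∧ x₃ ∈ E₂ ∧ x₃ ∈ E₃ ∧ x₁ ∈ E₃ := by
  constructor
  · rintro ⟨E, x, hE, hx, h⟩
    exact ⟨E 0, E 1, E 2, x 0, x 1, x 2, (h 0).1, (h 1).1, (h 2).1,
      hE.ne (by decide), hE.ne (by decide), hE.ne (by decide),
      hx.ne (by decide), hx.ne (by decide), hx.ne (by decide),
      (h 0).2.1, (h 0).2.2, (h 1).2.1, (h 1).2.2, (h 2).2.1, (h 2).2.2⟩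
  · rintro ⟨E₁, E₂, E₃, x₁, x₂, x₃, h⟩
    refine ⟨![E₁, E₂, E₃], ![x₁, x₂, x₃], ?_, ?_, ?_⟩ <;>
      simp [Function.Injective, Fin.forall_fin_succ, h, Ne.symm]

theorem hasBergeCycle_four_iff :
    HasBergeCycle 𝓕 4 ↔ ∃ (E₁ E₂ E₃ E₄ : Finset V) (x₁ x₂ x₃ x₄ : V),
      E₁ ∈ 𝓕 ∧ E₂ ∈ 𝓕 ∧ E₃ ∈ 𝓕 ∧ E₄ ∈ 𝓕 ∧
      E₁ ≠ E₂ ∧ E₁ ≠ E₃ ∧ E₁ ≠ E₄ ∧ E₂ ≠ E₃ ∧ E₂ ≠ E₄ ∧ E₃ ≠ E₄ ∧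
      x₁ ≠ x₂ ∧ x₁ ≠ x₃ ∧ x₁ ≠ x₄ ∧ x₂ ≠ x₃ ∧ x₂ ≠ x₄ ∧ x₃ ≠ x₄ ∧
      x₁ ∈ E₁ ∧ x₂ ∈ E₁ ∧ x₂ ∈ E₂ ∧ x₃ ∈ E₂ ∧ x₃ ∈ E₃ ∧ x₄ ∈ E₃ ∧ x₄ ∈ E₄ ∧ x₁ ∈ E₄ := by
  constructor
  · rintro ⟨E, x, hE, hx, h⟩
    exact ⟨E 0, E 1, E 2, E 3, x 0, x 1, x 2, x 3, (h 0).1, (h 1).1, (h 2).1, (h 3).1,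
      hE.ne (by decide), hE.ne (by decide), hE.ne (by decide),
      hE.ne (by decide), hE.ne (by decide), hE.ne (by decide),
      hx.ne (by decide), hx.ne (by decide), hx.ne (by decide),
      hx.ne (by decide), hx.ne (by decide), hx.ne (by decide),
      (h 0).2.1, (h 0).2.2, (h 1).2.1, (h 1).2.2,
      (h 2).2.1, (h 2).2.2, (h 3).2.1, (h 3).2.2⟩
  · rintro ⟨E₁, E₂, E₃, E₄, x₁, x₂, x₃, x₄, h⟩
    refine ⟨![E₁, E₂, E₃, E₄], ![x₁, x₂, x₃, x₄], ?_, ?_, ?_⟩ <;>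
      simp [Function.Injective, Fin.forall_fin_succ, h, Ne.symm]

theorem hasBergeCycle_three_of_areCollinear (hxy : AreCollinear 𝓕 x y) (hyz : AreCollinear 𝓕 y z)
    (hzx : AreCollinear 𝓕 z x) (h : ∀ F ∈ 𝓕, x ∈ F → y ∈ F → z ∉ F) : HasBergeCycle 𝓕 3 := by
  obtain ⟨E₁, hE₁, hx₁, hy₁⟩ := hxy
  obtain ⟨E₂, hE₂, hy₂, hz₂⟩ := hyz
  obtain ⟨E₃, hE₃, hz₃, hx₃⟩ := hzx
  -- Any coincidence among the edges or vertices would put all three points on one edge.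
  refine hasBergeCycle_three_iff.2 ⟨E₁, E₂, E₃, x, y, z, hE₁, hE₂, hE₃, ?_, ?_, ?_, ?_, ?_, ?_,
    hx₁, hy₁, hy₂, hz₂, hz₃, hx₃⟩ <;> rintro rfl <;> grind

theorem hasBergeCycle_four_of_areCollinear (hxy : AreCollinear 𝓕 x y) (hyz : AreCollinear 𝓕 y z)
    (hzw : AreCollinear 𝓕 z w) (hwx : AreCollinear 𝓕 w x) (hxz : ¬ AreCollinear 𝓕 x z)
    (hyw : ¬ AreCollinear 𝓕 y w) : HasBergeCycle 𝓕 4 := by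
  have not_mem_both : ∀ F ∈ 𝓕, ¬ (x ∈ F ∧ z ∈ F) ∧ ¬ (y ∈ F ∧ w ∈ F) :=
    fun F hF => ⟨fun h => hxz ⟨F, hF, h⟩, fun h => hyw ⟨F, hF, h⟩⟩
  obtain ⟨E₁, hE₁, hx₁, hy₁⟩ := hxy
  obtain ⟨E₂, hE₂, hy₂, hz₂⟩ := hyz
  obtain ⟨E₃, hE₃, hz₃, hw₃⟩ := hzw
  obtain ⟨E₄, hE₄, hw₄, hx₄⟩ := hwx
  -- Any coincidence would put `x` and `z`, or `y` and `w`, on one edge.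
  refine hasBergeCycle_four_iff.2 ⟨E₁, E₂, E₃, E₄, x, y, z, w, hE₁, hE₂, hE₃, hE₄,
    ?_, ?_, ?_, ?_, ?_, ?_, ?_, ?_, ?_, ?_, ?_, ?_,
    hx₁, hy₁, hy₂, hz₂, hz₃, hw₃, hw₄, hx₄⟩ <;> rintro rfl <;> grind

variable [DecidableEq V]

/-- A linear family (hypergraph): two distinct members share at most one point. -/
def IsLinearFamily (𝓕 : Finset (Finset V)) : Prop :=
  (𝓕 : Set (Finset V)).Pairwise fun F G => #(F ∩ G) ≤ 1

/-- The star of `x`: the queries whose answers `x` learns. -/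
def edgesAt (𝓕 : Finset (Finset V)) (x : V) : Finset (Finset V) := {F ∈ 𝓕 | x ∈ F}

/-- The queries answered YES when `D` is the set of defectives. Since the queries are known, this
set encodes all the answers. -/
def yesQueries (𝓕 : Finset (Finset V)) (D : Finset V) : Finset (Finset V) :=
  {F ∈ 𝓕 | (F ∩ D).Nonempty}

theorem mem_edgesAt : F ∈ edgesAt 𝓕 x ↔ F ∈ 𝓕 ∧ x ∈ F := mem_filter

theorem mem_yesQueries : F ∈ yesQueries 𝓕 D ↔ F ∈ 𝓕 ∧ (F ∩ D).Nonempty := mem_filter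

theorem yesQueries_subset : yesQueries 𝓕 D ⊆ 𝓕 := filter_subset _ _

theorem yesQueries_eq_iff :
    yesQueries 𝓕 X = yesQueries 𝓕 Y ↔ ∀ F ∈ 𝓕, ((F ∩ X).Nonempty ↔ (F ∩ Y).Nonempty) :=
  filter_inj'

theorem yesQueries_ne_iff :
    yesQueries 𝓕 X ≠ yesQueries 𝓕 Y ↔ ∃ F ∈ 𝓕, ((F ∩ X).Nonempty ∧ ¬ (F ∩ Y).Nonempty) ∨
      ((F ∩ Y).Nonempty ∧ ¬ (F ∩ X).Nonempty) := by
  simp only [ne_eq, yesQueries_eq_iff, not_forall, exists_prop]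
  refine exists_congr fun F => and_congr_right fun _ => ?_
  tauto

namespace IsLinearFamily

theorem eq_of_mem (h𝓕 : IsLinearFamily 𝓕) (hF : F ∈ 𝓕) (hG : G ∈ 𝓕) (hxy : x ≠ y)
    (hxF : x ∈ F) (hyF : y ∈ F) (hxG : x ∈ G) (hyG : y ∈ G) : F = G := by
  by_contra hFG
  exact hxy (card_le_one.1 (h𝓕 hF hG hFG) x (mem_inter.2 ⟨hxF, hxG⟩) y (mem_inter.2 ⟨hyF, hyG⟩))

theorem pairwiseDisjoint_inter (h𝓕 : IsLinearFamily 𝓕) (hx : x ∉ Y) :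
    (edgesAt 𝓕 x : Set (Finset V)).PairwiseDisjoint (· ∩ Y) := by
  intro F hF G hG hFG
  obtain ⟨hF, hxF⟩ := mem_edgesAt.1 hF
  obtain ⟨hG, hxG⟩ := mem_edgesAt.1 hG
  refine disjoint_left.2 fun y hyF hyG => hFG ?_
  obtain ⟨hyF, hyY⟩ := mem_inter.1 hyF
  exact h𝓕.eq_of_mem hF hG (ne_of_mem_of_not_mem hyY hx).symm hxF hyF hxG (mem_inter.1 hyG).1

theorem sum_card_inter (h𝓕 : IsLinearFamily 𝓕) (hx : x ∉ Y) :
    ∑ F ∈ edgesAt 𝓕 x, #(F ∩ Y) = #((edgesAt 𝓕 x).biUnion (· ∩ Y)) :=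
  (card_biUnion (h𝓕.pairwiseDisjoint_inter hx)).symm

theorem card_edgesAt_le_card_biUnion_inter (h𝓕 : IsLinearFamily 𝓕) (hx : x ∉ Y)
    (hmeet : ∀ F ∈ edgesAt 𝓕 x, (F ∩ Y).Nonempty) :
    #(edgesAt 𝓕 x) ≤ #((edgesAt 𝓕 x).biUnion (· ∩ Y)) := by
  rw [← h𝓕.sum_card_inter hx, card_eq_sum_ones]
  exact sum_le_sum fun F hF => (hmeet F hF).card_pos

theorem card_edgesAt_le (h𝓕 : IsLinearFamily 𝓕) (hx : x ∉ Y)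
    (hmeet : ∀ F ∈ edgesAt 𝓕 x, (F ∩ Y).Nonempty) : #(edgesAt 𝓕 x) ≤ #Y :=
  (h𝓕.card_edgesAt_le_card_biUnion_inter hx hmeet).trans
    (card_le_card (biUnion_subset.2 fun _ _ => inter_subset_right))

theorem areCollinear_of_forall_inter_nonempty (h𝓕 : IsLinearFamily 𝓕) (hx : x ∉ Y)
    (hmeet : ∀ F ∈ edgesAt 𝓕 x, (F ∩ Y).Nonempty) (hY : #Y ≤ #(edgesAt 𝓕 x)) (hy : y ∈ Y) :
    AreCollinear 𝓕 x y := by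
  have cover : (edgesAt 𝓕 x).biUnion (· ∩ Y) = Y :=
    eq_of_subset_of_card_le (biUnion_subset.2 fun _ _ => inter_subset_right)
      (hY.trans (h𝓕.card_edgesAt_le_card_biUnion_inter hx hmeet))
  rw [← cover] at hy
  obtain ⟨F, hF, hyF⟩ := mem_biUnion.1 hy
  obtain ⟨hF, hxF⟩ := mem_edgesAt.1 hF
  exact ⟨F, hF, hxF, (mem_inter.1 hyF).1⟩

theorem card_inter_eq_one (h𝓕 : IsLinearFamily 𝓕) (hx : x ∉ Y)
    (hmeet : ∀ F ∈ edgesAt 𝓕 x, (F ∩ Y).Nonempty) (hY : #Y ≤ #(edgesAt 𝓕 x))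
    (hF : F ∈ edgesAt 𝓕 x) : #(F ∩ Y) = 1 := by
  have one_le : ∀ G ∈ edgesAt 𝓕 x, 1 ≤ #(G ∩ Y) := fun G hG => (hmeet G hG).card_pos
  have sum_le : ∑ G ∈ edgesAt 𝓕 x, #(G ∩ Y) ≤ ∑ G ∈ edgesAt 𝓕 x, 1 := by
    rw [h𝓕.sum_card_inter hx, ← card_eq_sum_ones]
    exact (card_le_card (biUnion_subset.2 fun _ _ => inter_subset_right)).trans hY
  exact ((sum_eq_sum_iff_of_le one_le).1 ((sum_le_sum one_le).antisymm sum_le) F hF).symm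

end IsLinearFamily

theorem inter_nonempty_of_yesQueries_eq (hXY : yesQueries 𝓕 X = yesQueries 𝓕 Y) (hx : x ∈ X) :
    ∀ F ∈ edgesAt 𝓕 x, (F ∩ Y).Nonempty := by
  intro F hF
  obtain ⟨hF, hxF⟩ := mem_edgesAt.1 hF
  exact (yesQueries_eq_iff.1 hXY F hF).1 ⟨x, mem_inter.2 ⟨hxF, hx⟩⟩

namespace IsLinearFamily

theorem hasBergeCycle_three_of_yesQueries_eq (h𝓕 : IsLinearFamily 𝓕)
    (hXdeg : ∀ v, #X ≤ #(edgesAt 𝓕 v)) (hYdeg : ∀ v, #Y ≤ #(edgesAt 𝓕 v))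
    (hXY : yesQueries 𝓕 X = yesQueries 𝓕 Y)
    (hx : x ∈ X \ Y) (hy : y ∈ Y \ X) (hz : z ∈ X ∩ Y) : HasBergeCycle 𝓕 3 := by
  obtain ⟨hxX, hxY⟩ := mem_sdiff.1 hx
  obtain ⟨hyY, hyX⟩ := mem_sdiff.1 hy
  obtain ⟨hzX, hzY⟩ := mem_inter.1 hz
  have hx_meet := inter_nonempty_of_yesQueries_eq hXY hxX
  have hy_meet := inter_nonempty_of_yesQueries_eq hXY.symm hyY
  refine hasBergeCycle_three_of_areCollinear
    (h𝓕.areCollinear_of_forall_inter_nonempty hxY hx_meet (hYdeg x) hyY)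
    (h𝓕.areCollinear_of_forall_inter_nonempty hyX hy_meet (hXdeg y) hzX)
    (h𝓕.areCollinear_of_forall_inter_nonempty hxY hx_meet (hYdeg x) hzY).symm
    fun F hF hxF hyF hzF => ?_
  have trace_one := h𝓕.card_inter_eq_one hxY hx_meet (hYdeg x) (mem_edgesAt.2 ⟨hF, hxF⟩)
  have hyz : y = z :=
    card_le_one.1 trace_one.le y (mem_inter.2 ⟨hyF, hyY⟩) z (mem_inter.2 ⟨hzF, hzY⟩)
  exact hyX (hyz ▸ hzX)

theorem not_areCollinear_of_yesQueries_eq (h𝓕 : IsLinearFamily 𝓕)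
    (hXdeg : ∀ v, #X ≤ #(edgesAt 𝓕 v)) (hXY : yesQueries 𝓕 X = yesQueries 𝓕 Y)
    (hdisj : Disjoint X Y) (hx : x ∈ X) (hz : z ∈ X) (hxz : x ≠ z) : ¬ AreCollinear 𝓕 x z := by
  rintro ⟨F, hF, hxF, hzF⟩
  obtain ⟨y, hy⟩ := inter_nonempty_of_yesQueries_eq hXY hx F (mem_edgesAt.2 ⟨hF, hxF⟩)
  obtain ⟨hyF, hyY⟩ := mem_inter.1 hy
  have trace_one := h𝓕.card_inter_eq_one (disjoint_right.1 hdisj hyY)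
    (inter_nonempty_of_yesQueries_eq hXY.symm hyY) (hXdeg y) (mem_edgesAt.2 ⟨hF, hyF⟩)
  exact hxz (card_le_one.1 trace_one.le x (mem_inter.2 ⟨hxF, hx⟩) z (mem_inter.2 ⟨hzF, hz⟩))

theorem hasBergeCycle_four_of_yesQueries_eq (h𝓕 : IsLinearFamily 𝓕)
    (hXdeg : ∀ v, #X ≤ #(edgesAt 𝓕 v)) (hYdeg : ∀ v, #Y ≤ #(edgesAt 𝓕 v))
    (hXY : yesQueries 𝓕 X = yesQueries 𝓕 Y) (hdisj : Disjoint X Y)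
    (hX : 1 < #X) (hY : 1 < #Y) : HasBergeCycle 𝓕 4 := by
  obtain ⟨x, hx, z, hz, hxz⟩ := one_lt_card.1 hX
  obtain ⟨y, hy, w, hw, hyw⟩ := one_lt_card.1 hY
  have collinear : ∀ u ∈ X, ∀ v ∈ Y, AreCollinear 𝓕 u v := fun u hu v hv =>
    h𝓕.areCollinear_of_forall_inter_nonempty (disjoint_left.1 hdisj hu)
      (inter_nonempty_of_yesQueries_eq hXY hu) (hYdeg u) hv
  exact hasBergeCycle_four_of_areCollinear (collinear x hx y hy) (collinear z hz y hy).symm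
    (collinear z hz w hw) (collinear x hx w hw).symm
    (h𝓕.not_areCollinear_of_yesQueries_eq hXdeg hXY hdisj hx hz hxz)
    (h𝓕.not_areCollinear_of_yesQueries_eq hYdeg hXY.symm hdisj.symm hy hw hyw)

theorem subset_of_yesQueries_eq (h𝓕 : IsLinearFamily 𝓕) (hd : 2 ≤ d)
    (hdeg : ∀ v, d ≤ #(edgesAt 𝓕 v)) (hC3 : ¬ HasBergeCycle 𝓕 3) (hC4 : ¬ HasBergeCycle 𝓕 4)
    (hX : #X ≤ d) (hY : #Y ≤ d) (hXY : yesQueries 𝓕 X = yesQueries 𝓕 Y) : X ⊆ Y := by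
  have hXdeg : ∀ v, #X ≤ #(edgesAt 𝓕 v) := fun v => hX.trans (hdeg v)
  have hYdeg : ∀ v, #Y ≤ #(edgesAt 𝓕 v) := fun v => hY.trans (hdeg v)
  by_contra hsub
  obtain ⟨x, hxX, hxY⟩ := not_subset.1 hsub
  have d_le_card : d ≤ #Y :=
    (hdeg x).trans (h𝓕.card_edgesAt_le hxY (inter_nonempty_of_yesQueries_eq hXY hxX))
  obtain ⟨y, hyY, hyX⟩ := not_subset.1 fun hYX : Y ⊆ X =>
    hsub (eq_of_subset_of_card_le hYX (hX.trans d_le_card)).ge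
  have d_le_card' : d ≤ #X :=
    (hdeg y).trans (h𝓕.card_edgesAt_le hyX (inter_nonempty_of_yesQueries_eq hXY.symm hyY))
  by_cases hdisj : Disjoint X Y
  · exact hC4 (h𝓕.hasBergeCycle_four_of_yesQueries_eq hXdeg hYdeg hXY hdisj
      (hd.trans d_le_card') (hd.trans d_le_card))
  · obtain ⟨z, hz⟩ := not_disjoint_iff_nonempty_inter.1 hdisj
    exact hC3 (h𝓕.hasBergeCycle_three_of_yesQueries_eq hXdeg hYdeg hXY
      (mem_sdiff.2 ⟨hxX, hxY⟩) (mem_sdiff.2 ⟨hyY, hyX⟩) hz)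

theorem injOn_yesQueries (h𝓕 : IsLinearFamily 𝓕) (hd : 2 ≤ d)
    (hdeg : ∀ v, d ≤ #(edgesAt 𝓕 v)) (hC3 : ¬ HasBergeCycle 𝓕 3) (hC4 : ¬ HasBergeCycle 𝓕 4) :
    Set.InjOn (yesQueries 𝓕) {X | #X ≤ d} := fun _ hX _ hY hXY =>
  (h𝓕.subset_of_yesQueries_eq hd hdeg hC3 hC4 hX hY hXY).antisymm
    (h𝓕.subset_of_yesQueries_eq hd hdeg hC3 hC4 hY hX hXY.symm)

theorem yesQueries_edgesAt_image (h𝓕 : IsLinearFamily 𝓕) {𝓢 : Finset (Finset V)}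
    (h𝓢 : 𝓢 ⊆ edgesAt 𝓕 x) {c : Finset V → V} (hc : ∀ F ∈ 𝓢, c F ∈ F ∧ c F ≠ x) :
    yesQueries (edgesAt 𝓕 x) (𝓢.image c) = 𝓢 := by
  ext F
  refine ⟨fun hF => ?_, fun hF => mem_yesQueries.2
    ⟨h𝓢 hF, c F, mem_inter.2 ⟨(hc F hF).1, mem_image_of_mem c hF⟩⟩⟩
  obtain ⟨hF, z, hz⟩ := mem_yesQueries.1 hF
  obtain ⟨hzF, hz⟩ := mem_inter.1 hz
  obtain ⟨G, hG, rfl⟩ := mem_image.1 hz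
  obtain ⟨hF, hxF⟩ := mem_edgesAt.1 hF
  obtain ⟨hG', hxG⟩ := mem_edgesAt.1 (h𝓢 hG)
  have hFG : F = G := h𝓕.eq_of_mem hF hG' (hc G hG).2 hzF hxF (hc G hG).1 hxG
  exact hFG ▸ hG

end IsLinearFamily

theorem yesQueries_union_of_disjoint_biUnion (h : Disjoint (𝓕.biUnion id) Y) :
    yesQueries 𝓕 (X ∪ Y) = yesQueries 𝓕 X := by
  refine yesQueries_eq_iff.2 fun F hF => ?_
  have hFY : F ∩ Y = ∅ := disjoint_iff_inter_eq_empty.1 ((disjoint_biUnion_left ..).1 h F hF)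
  rw [inter_union_distrib_left, hFY, union_empty]

theorem card_biUnion_edgesAt_le {r : ℕ} (hsize : ∀ F ∈ edgesAt 𝓕 x, #F ≤ r) :
    #((edgesAt 𝓕 x).biUnion id) ≤ #(edgesAt 𝓕 x) * (r - 1) + 1 := by
  have subset_insert : (edgesAt 𝓕 x).biUnion id ⊆
      insert x ((edgesAt 𝓕 x).biUnion fun F => F.erase x) := by
    refine biUnion_subset.2 fun F hF => ?_
    rw [id_eq, subset_insert_iff]
    exact subset_biUnion_of_mem (fun F => F.erase x) hF
  calc #((edgesAt 𝓕 x).biUnion id)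
      ≤ #((edgesAt 𝓕 x).biUnion fun F => F.erase x) + 1 :=
        (card_le_card subset_insert).trans (card_insert_le _ _)
    _ ≤ #(edgesAt 𝓕 x) * (r - 1) + 1 := by
        gcongr
        refine card_biUnion_le_card_mul _ _ _ fun F hF => ?_
        rw [card_erase_of_mem (mem_edgesAt.1 hF).2]
        exact Nat.sub_le_sub_right (hsize F hF) 1

theorem IsLinearFamily.exists_yesQueries_edgesAt_eq [Fintype V] (h𝓕 : IsLinearFamily 𝓕)
    (hsize : ∀ F ∈ edgesAt 𝓕 x, 3 ≤ #F) (hdeg : #(edgesAt 𝓕 x) ≤ d)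
    (hV : #((edgesAt 𝓕 x).biUnion id) + d + 1 ≤ Fintype.card V) (D : Finset V) (y : V) :
    ∃ D' : Finset V, #D' = d ∧ y ∉ D' ∧
      yesQueries (edgesAt 𝓕 x) D = yesQueries (edgesAt 𝓕 x) D' := by
  have exists_point : ∀ F ∈ edgesAt 𝓕 x, ∃ z ∈ F, z ∉ ({x, y} : Finset V) := fun F hF =>
    exists_mem_notMem_of_card_lt_card (card_le_two.trans_lt (hsize F hF))
  simp only [mem_insert, mem_singleton, not_or] at exists_point
  have : Nonempty V := ⟨x⟩
  choose! c hc using exists_point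
  have h𝓢 : yesQueries (edgesAt 𝓕 x) D ⊆ edgesAt 𝓕 x := yesQueries_subset
  set A := (yesQueries (edgesAt 𝓕 x) D).image c with hA
  set O := (insert y ((edgesAt 𝓕 x).biUnion id))ᶜ with hO
  have card_A : #A ≤ d := card_image_le.trans ((card_le_card h𝓢).trans hdeg)
  have card_O : d ≤ #O := by
    have := card_insert_le y ((edgesAt 𝓕 x).biUnion id)
    rw [hO, card_compl]
    omega
  obtain ⟨D', hAD', hD', card_D'⟩ := exists_subsuperset_card_eq subset_union_left card_A
    (card_O.trans (card_le_card (subset_union_right (s₁ := A))))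
  have hy_A : y ∉ A := fun hy => by
    obtain ⟨F, hF, hFy⟩ := mem_image.1 hy
    exact (hc F (h𝓢 hF)).2.2 hFy
  have hy_O : y ∉ O := by simp [hO]
  have disjoint_rest : Disjoint ((edgesAt 𝓕 x).biUnion id) (D' \ A) := by
    refine disjoint_of_subset_right (sdiff_le_iff.2 hD') ?_
    exact disjoint_compl_right.mono_left (subset_insert _ _)
  refine ⟨D', card_D', fun hy => (mem_union.1 (hD' hy)).elim hy_A hy_O, ?_⟩
  rw [← union_sdiff_of_subset hAD', yesQueries_union_of_disjoint_biUnion disjoint_rest, hA,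
    h𝓕.yesQueries_edgesAt_image h𝓢 fun F hF => ⟨(hc F (h𝓢 hF)).1, (hc F (h𝓢 hF)).2.1⟩]

theorem linear_girth5_solves_model3d_general [Fintype V] {r : ℕ} (hd : 2 ≤ d)
    (hV : d * r + 2 ≤ Fintype.card V) (hthree : ∀ F ∈ 𝓕, 3 ≤ #F) (hsize : ∀ F ∈ 𝓕, #F ≤ r)
    (hreg : ∀ x, #(edgesAt 𝓕 x) = d) (hlin : IsLinearFamily 𝓕)
    (hC3 : ¬ HasBergeCycle 𝓕 3) (hC4 : ¬ HasBergeCycle 𝓕 4) :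
    Set.InjOn (yesQueries 𝓕) {X | #X ≤ d} ∧
      ∀ (x : V) (D : Finset V) (y : V), ∃ D' : Finset V, #D' = d ∧ y ∉ D' ∧
        yesQueries (edgesAt 𝓕 x) D = yesQueries (edgesAt 𝓕 x) D' := by
  refine ⟨hlin.injOn_yesQueries hd (fun x => (hreg x).ge) hC3 hC4, fun x D y => ?_⟩
  have card_star := card_biUnion_edgesAt_le (x := x) fun F hF => hsize F (mem_edgesAt.1 hF).1
  obtain ⟨F, hF⟩ : (edgesAt 𝓕 x).Nonempty := card_pos.1 (by rw [hreg]; omega)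
  have hr : 1 ≤ r := by
    have := hthree F (mem_edgesAt.1 hF).1
    have := hsize F (mem_edgesAt.1 hF).1
    omega
  refine hlin.exists_yesQueries_edgesAt_eq (fun F hF => hthree F (mem_edgesAt.1 hF).1)
    (hreg x).le ?_ D y
  calc #((edgesAt 𝓕 x).biUnion id) + d + 1
      ≤ d * (r - 1) + 1 + d + 1 := by gcongr; rwa [hreg] at card_star
    _ = d * (r - 1 + 1) + 2 := by ring
    _ = d * r + 2 := by rw [Nat.sub_add_cancel hr]
    _ ≤ Fintype.card V := hV

end

/-- an `r`-uniform, `d`-regular, linear family of subsets of `[n]` with no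
Berge cycle of length 3 or 4 (where `d ≥ 2`, `r ≥ 3`, `n ≥ dr+2`) is `d`-separating and
solves Model 3_d: no single element can identify any defective. -/
theorem linear_girth5_solves_model3d (n d r : ℕ) (hd : 2 ≤ d) (hr : 3 ≤ r)
    (hn : d * r + 2 ≤ n)
    (𝓕 : Finset (Finset (Fin n)))
    (hunif : ∀ F ∈ 𝓕, F.card = r)
    (hreg : ∀ x : Fin n, (𝓕.filter (fun F => x ∈ F)).card = d)
    (hlin : ∀ F ∈ 𝓕, ∀ G ∈ 𝓕, F ≠ G → (F ∩ G).card ≤ 1)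
    (hC3 : ¬ ∃ (E₁ E₂ E₃ : Finset (Fin n)) (x₁ x₂ x₃ : Fin n),
      E₁ ∈ 𝓕 ∧ E₂ ∈ 𝓕 ∧ E₃ ∈ 𝓕 ∧
      E₁ ≠ E₂ ∧ E₁ ≠ E₃ ∧ E₂ ≠ E₃ ∧
      x₁ ≠ x₂ ∧ x₁ ≠ x₃ ∧ x₂ ≠ x₃ ∧
      x₁ ∈ E₁ ∧ x₂ ∈ E₁ ∧ x₂ ∈ E₂ ∧ x₃ ∈ E₂ ∧ x₃ ∈ E₃ ∧ x₁ ∈ E₃)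
    (hC4 : ¬ ∃ (E₁ E₂ E₃ E₄ : Finset (Fin n)) (x₁ x₂ x₃ x₄ : Fin n),
      E₁ ∈ 𝓕 ∧ E₂ ∈ 𝓕 ∧ E₃ ∈ 𝓕 ∧ E₄ ∈ 𝓕 ∧
      E₁ ≠ E₂ ∧ E₁ ≠ E₃ ∧ E₁ ≠ E₄ ∧ E₂ ≠ E₃ ∧ E₂ ≠ E₄ ∧ E₃ ≠ E₄ ∧
      x₁ ≠ x₂ ∧ x₁ ≠ x₃ ∧ x₁ ≠ x₄ ∧ x₂ ≠ x₃ ∧ x₂ ≠ x₄ ∧ x₃ ≠ x₄ ∧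
      x₁ ∈ E₁ ∧ x₂ ∈ E₁ ∧ x₂ ∈ E₂ ∧ x₃ ∈ E₂ ∧ x₃ ∈ E₃ ∧ x₄ ∈ E₃ ∧ x₄ ∈ E₄ ∧ x₁ ∈ E₄) :
    (∀ X Y : Finset (Fin n), X.card = d → Y.card = d → X ≠ Y →
      ∃ F ∈ 𝓕, ((F ∩ X).Nonempty ∧ ¬ (F ∩ Y).Nonempty) ∨
        ((F ∩ Y).Nonempty ∧ ¬ (F ∩ X).Nonempty)) ∧
    (∀ x : Fin n, ∀ D : Finset (Fin n), D.card = d → ∀ y ∈ D,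
      ∃ D' : Finset (Fin n), D'.card = d ∧ y ∉ D' ∧
        ∀ F ∈ 𝓕, x ∈ F → ((F ∩ D).Nonempty ↔ (F ∩ D').Nonempty)) := by
  rw [← hasBergeCycle_three_iff] at hC3
  rw [← hasBergeCycle_four_iff] at hC4
  obtain ⟨hsep, hconceal⟩ := linear_girth5_solves_model3d_general hd
    (hn.trans_eq (Fintype.card_fin n).symm) (fun F hF => hr.trans_eq (hunif F hF).symm)
    (fun F hF => (hunif F hF).le) hreg (fun F hF G hG => hlin F hF G hG) hC3 hC4
  refine ⟨fun X Y hX hY hXY => yesQueries_ne_iff.1 (hsep.ne hX.le hY.le hXY),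
    fun x D _ y _ => ?_⟩
  obtain ⟨D', card_D', hy, h⟩ := hconceal x D y
  exact ⟨D', card_D', hy, fun F hF hx => yesQueries_eq_iff.1 h F (mem_edgesAt.2 ⟨hF, hx⟩)⟩
end

section
/- For every integer d ≥ 2 there exists n_0 such that for every n ≥ n_0 there is a family 𝓕 of subsets of [n] which is d-separating and satisfies: for every x ∈ [n], every D ⊆ [n] with |D| = d and every y ∈ D, there exists D' ⊆ [n] with |D'| = d and y ∉ D' such that every F ∈ 𝓕 with x ∈ F satisfies F ∩ D ≠ ∅ if and only if F ∩ D' ≠ ∅. (That is, for n large enough compared to d > 1, Model 3_d has a solution.) -/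
/-!
Let `d` partitions of the points be given, and let the queries be their parts, called blocks.
Suppose that blocks of different partitions form no digons, triangles or quadrangles.

*Separation.* If a `d`-set `Y` meets every block through a point `x ∉ Y`, it has exactly one point
on each of these `d` blocks. Two such points `x` would form a quadrangle or triangle with two points
of `Y`. So if `d`-sets `X ≠ Y` meet the same blocks, then `X \ Y = {x}`, and `x`, a point of `Y \ X`
and a point of `X ∩ Y` form a triangle.

*Hiding.* The blocks through `x` pairwise meet only in `x`. If all of them have at least three
points, a defective `y ≠ x` which is the only one on its block through `x` can be traded for another
point of that block; otherwise `y` can be traded for a point on no block through `x`. A defective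
`x` forces all its answers to be YES, and so do `d` other points, one on each block through `x`.

*Construction.* The points are triples `(t, c, s)` of a vector `t`, a copy `c` and a layer `s`, and
the `i`-th partition is given by the label `(t + e_{i,s}, c)` with independent vectors `e_{i,s}`.
Three complete layers and a part of a fourth one give every sufficiently large number of points.
-/

open Finset

universe u

namespace GroupTesting

section Families

variable {V : Type*} [DecidableEq V]

/-- `d`-separating families: the queries in `𝓕` tell apart any two defective sets of size `d`. -/
def IsSeparating (d : ℕ) (𝓕 : Finset (Finset V)) : Prop :=
  ∀ X Y : Finset V, #X = d → #Y = d → X ≠ Y →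
    ∃ F ∈ 𝓕, ((F ∩ X).Nonempty ∧ ¬(F ∩ Y).Nonempty) ∨ ((F ∩ Y).Nonempty ∧ ¬(F ∩ X).Nonempty)

/-- Secrecy: an element which learns the answers to its own queries in `𝓕`, and knows that there
are exactly `d` defectives, cannot identify any of them. -/
def HidesDefectives (d : ℕ) (𝓕 : Finset (Finset V)) : Prop :=
  ∀ (x : V) (D : Finset V), #D = d → ∀ y ∈ D, ∃ D' : Finset V, #D' = d ∧ y ∉ D' ∧
    ∀ F ∈ 𝓕, x ∈ F → ((F ∩ D).Nonempty ↔ (F ∩ D').Nonempty)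

theorem card_insert_erase {D : Finset V} {y z : V} (hy : y ∈ D) (hz : z ∉ D) :
    #(insert z (D.erase y)) = #D := by
  rw [card_insert_of_notMem fun h ↦ hz (mem_of_mem_erase h), card_erase_add_one hy]

theorem exists_mem_iff_exists_mem_insert_erase {D : Finset V} {y z : V} {P : V → Prop} (hy : y ∈ D)
    (hyz : P y → P z ∨ ∃ u ∈ D, u ≠ y ∧ P u) (hzy : P z → P y) :
    (∃ u ∈ D, P u) ↔ ∃ u ∈ insert z (D.erase y), P u := by
  simp only [mem_insert, mem_erase, exists_eq_or_imp]
  grind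

end Families

section Labellings

variable {V ι Q : Type*} {p : V → ι → Q}

/-- The labelling `p` encodes one partition of `V` for each direction `i : ι`: two points lie in the
same block of direction `i` iff their labels `p x i` agree. It is quadrangle-free if a closed walk
`x, y, z, w, x` along blocks that turns at both ends of its step from `x` to `y` has `x = y` or
`y = z`. Since the walk may rest at a point, this also excludes digons and triangles of blocks. -/
def QuadrangleFree (p : V → ι → Q) : Prop :=
  ∀ ⦃x y z w : V⦄ ⦃i j k l : ι⦄, i ≠ j → i ≠ l →
    p x i = p y i → p y j = p z j → p z k = p w k → p w l = p x l → x = y ∨ y = z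

/-- Every block has at least three points, in the form in which this is used: the block of `x` has a
point different from `x` and from any given `y`. -/
def HasThickBlocks (p : V → ι → Q) : Prop :=
  ∀ (i : ι) (x y : V), ∃ z, p z i = p x i ∧ z ≠ x ∧ z ≠ y

/-- No set of `d` points contains all the points that share no block with a given `x`. -/
def HasRemotePoints (d : ℕ) (p : V → ι → Q) : Prop :=
  ∀ (x : V) (D : Finset V), #D = d → ∃ w ∉ D, ∀ i, p w i ≠ p x i

/-- The set `Y` meets every block through the point `x`. -/
def MeetsBlocksThrough (p : V → ι → Q) (x : V) (Y : Finset V) : Prop :=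
  ∀ i, ∃ y ∈ Y, p y i = p x i

namespace QuadrangleFree

variable {x x' y z : V} {i j k : ι} {X Y : Finset V}

theorem comp_injective {W : Type*} (hp : QuadrangleFree p) {f : W → V} (hf : f.Injective) :
    QuadrangleFree fun w ↦ p (f w) :=
  fun _ _ _ _ _ _ _ _ hij hil hxy hyz hzw hwx ↦
    (hp hij hil hxy hyz hzw hwx).imp (hf ·) (hf ·)

theorem eq_of_digon (hp : QuadrangleFree p) (hij : i ≠ j) (hi : p x i = p y i)
    (hj : p x j = p y j) : x = y :=
  (hp hij hij hi hj.symm (rfl : p x i = p x i) rfl).elim id Eq.symm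

theorem eq_of_triangle (hp : QuadrangleFree p) (hij : i ≠ j) (hik : i ≠ k) (hi : p x i = p y i)
    (hj : p y j = p z j) (hk : p z k = p x k) : x = y := by
  obtain h | rfl := hp hij hik hi hj hk rfl
  · exact h
  · exact hp.eq_of_digon hik hi hk.symm

theorem exists_transversal [Fintype ι] (hp : QuadrangleFree p) (hY : #Y ≤ Fintype.card ι)
    (hx : x ∉ Y) (h : MeetsBlocksThrough p x Y) :
    ∃ f : ι → V, (∀ i, p (f i) i = p x i) ∧ ∀ y ∈ Y, ∃ i, f i = y := by
  classical
  choose f hfY hf using h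
  have hinj : f.Injective := fun i j hij ↦ by
    by_contra hne
    exact hx (hp.eq_of_digon hne (hf i).symm (hij ▸ (hf j).symm) ▸ hfY i)
  have himage : univ.image f = Y :=
    eq_of_subset_of_card_le (image_subset_iff.mpr fun i _ ↦ hfY i)
      (by rwa [card_image_of_injective _ hinj, card_univ])
  exact ⟨f, hf, fun y hy ↦ by simpa using himage.ge hy⟩

theorem eq_of_meetsBlocksThrough [Fintype ι] (hp : QuadrangleFree p) (hY : #Y ≤ Fintype.card ι)
    (hY' : 1 < #Y) (hx : x ∉ Y) (hx' : x' ∉ Y) (h : MeetsBlocksThrough p x Y)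
    (h' : MeetsBlocksThrough p x' Y) : x = x' := by
  obtain ⟨f, hf, hfY⟩ := hp.exists_transversal hY hx h
  obtain ⟨g, hg, hgY⟩ := hp.exists_transversal hY hx' h'
  obtain ⟨y, hy, y', hy', hne⟩ := one_lt_card.mp hY'
  obtain ⟨i, hi⟩ := hfY y hy
  obtain ⟨j, hj⟩ := hfY y' hy'
  obtain ⟨k, hk⟩ := hgY y hy
  obtain ⟨l, hl⟩ := hgY y' hy'
  have hij : i ≠ j := fun h ↦ hne (by rw [← hi, ← hj, h])
  have hkl : k ≠ l := fun h ↦ hne (by rw [← hk, ← hl, h])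
  have hxy : p x i = p y i := hi ▸ (hf i).symm
  have hyx' : p y k = p x' k := hk ▸ hg k
  have hx'y' : p x' l = p y' l := hl ▸ (hg l).symm
  have hy'x : p y' j = p x j := hj ▸ hf j
  by_contra hxx'
  have hik : i ≠ k := by
    rintro rfl
    exact hxx' (hp.eq_of_triangle hkl hij (hxy.trans hyx') hx'y' hy'x)
  rcases hp hik hij hxy hyx' hx'y' hy'x with rfl | rfl
  · exact hx hy
  · exact hx' hy

theorem inter_eq_empty_of_meetsBlocksThrough [Fintype ι] [DecidableEq V] (hp : QuadrangleFree p)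
    (hX : #X ≤ Fintype.card ι) (hY : #Y ≤ Fintype.card ι) (hxY : x ∉ Y) (hyY : y ∈ Y) (hyX : y ∉ X)
    (hx : MeetsBlocksThrough p x Y) (hy : MeetsBlocksThrough p y X) :
    X ∩ Y = ∅ := by
  refine eq_empty_of_forall_notMem fun z hz ↦ ?_
  obtain ⟨hzX, hzY⟩ := mem_inter.mp hz
  obtain ⟨f, hf, hfY⟩ := hp.exists_transversal hY hxY hx
  obtain ⟨g, hg, hgX⟩ := hp.exists_transversal hX hyX hy
  obtain ⟨i, rfl⟩ := hfY y hyY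
  obtain ⟨j, rfl⟩ := hfY z hzY
  obtain ⟨k, hk⟩ := hgX (f j) hzX
  have hij : i ≠ j := fun h ↦ hyX (h ▸ hzX)
  have hyz : p (f i) k = p (f j) k := hk ▸ (hg k).symm
  have hik : i ≠ k := by
    rintro rfl
    exact hxY (hp.eq_of_digon hij ((hf i).symm.trans hyz) (hf j).symm ▸ hzY)
  exact hxY (hp.eq_of_triangle hik hij (hf i).symm hyz (hf j) ▸ hyY)

theorem eq_of_forall_meetsBlocksThrough [Fintype ι] (hp : QuadrangleFree p)
    (hι : 1 < Fintype.card ι) (hX : #X = Fintype.card ι) (hY : #Y = Fintype.card ι)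
    (hXY : ∀ x ∈ X, MeetsBlocksThrough p x Y) (hYX : ∀ y ∈ Y, MeetsBlocksThrough p y X) :
    X = Y := by
  classical
  by_contra hne
  obtain ⟨x, hxX, hxY⟩ := not_subset.mp fun h ↦ hne (eq_of_subset_of_card_le h (by lia))
  obtain ⟨y, hyY, hyX⟩ := not_subset.mp fun h ↦ hne (eq_of_subset_of_card_le h (by lia)).symm
  obtain ⟨z, hzX, hzx⟩ := exists_mem_ne (hX ▸ hι) x
  have hzY : z ∈ Y := by
    by_contra hzY
    exact hzx <|
      hp.eq_of_meetsBlocksThrough hY.le (hY ▸ hι) hzY hxY (hXY z hzX) (hXY x hxX)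
  have hdisj : X ∩ Y = ∅ := hp.inter_eq_empty_of_meetsBlocksThrough hX.le hY.le hxY hyY hyX
    (hXY x hxX) (hYX y hyY)
  exact notMem_empty z (hdisj ▸ mem_inter.mpr ⟨hzX, hzY⟩)

theorem exists_avoiding_self [Fintype ι] (hp : QuadrangleFree p) (hthick : HasThickBlocks p)
    (x : V) :
    ∃ D : Finset V, #D = Fintype.card ι ∧ x ∉ D ∧ MeetsBlocksThrough p x D := by
  classical
  choose z hz hzx _ using fun i ↦ hthick i x x
  have hinj : z.Injective := fun i j hij ↦ by
    by_contra hne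
    exact hzx i (hp.eq_of_digon hne (hz i) (hij ▸ hz j))
  exact ⟨univ.image z, by rw [card_image_of_injective _ hinj, card_univ], by simpa using hzx,
    fun i ↦ ⟨z i, mem_image_of_mem z (mem_univ i), hz i⟩⟩

theorem exists_avoiding_of_ne {D : Finset V} (hp : QuadrangleFree p)
    (hthick : HasThickBlocks p) (hremote : HasRemotePoints #D p) (hy : y ∈ D) (hyx : y ≠ x) :
    ∃ D' : Finset V, #D' = #D ∧ y ∉ D' ∧
      ∀ i, (∃ u ∈ D, p u i = p x i) ↔ ∃ u ∈ D', p u i = p x i := by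
  classical
  suffices ∃ z ∉ D, ∀ i, (p y i = p x i → p z i = p x i ∨ ∃ u ∈ D, u ≠ y ∧ p u i = p x i) ∧
      (p z i = p x i → p y i = p x i) by
    obtain ⟨z, hzD, hz⟩ := this
    have hzy : z ≠ y := fun h ↦ hzD (h ▸ hy)
    exact ⟨insert z (D.erase y), card_insert_erase hy hzD, by simp [hzy.symm], fun i ↦
      exists_mem_iff_exists_mem_insert_erase hy (hz i).1 (hz i).2⟩
  by_cases halone : ∃ i, p y i = p x i ∧ ∀ u ∈ D, u ≠ y → p u i ≠ p x i
  · obtain ⟨i, hyi, hD⟩ := halone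
    obtain ⟨z, hzi, hzx, hzy⟩ := hthick i x y
    have eq_dir {u : V} {j : ι} (hux : u ≠ x) (hui : p u i = p x i) (huj : p u j = p x j) :
        j = i := by
      by_contra hji
      exact hux (hp.eq_of_digon hji huj hui)
    exact ⟨z, fun hzD ↦ hD z hzD hzy hzi, fun j ↦
      ⟨fun hyj ↦ .inl (eq_dir hyx hyi hyj ▸ hzi), fun hzj ↦ eq_dir hzx hzi hzj ▸ hyi⟩⟩
  · push Not at halone
    obtain ⟨w, hwD, hw⟩ := hremote x D rfl
    exact ⟨w, hwD, fun i ↦ ⟨fun hyi ↦ .inr (halone i hyi), fun hwi ↦ absurd hwi (hw i)⟩⟩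

end QuadrangleFree

end Labellings

section Blocks

variable {V ι Q : Type*} [Fintype V] [DecidableEq Q] {p : V → ι → Q}

/-- The block of direction `i` through the point `x`. -/
def block (p : V → ι → Q) (i : ι) (x : V) : Finset V := {y | p y i = p x i}

theorem mem_block {i : ι} {x y : V} : y ∈ block p i x ↔ p y i = p x i := by simp [block]

variable [DecidableEq V]

theorem block_inter_nonempty {i : ι} {x : V} {X : Finset V} :
    (block p i x ∩ X).Nonempty ↔ ∃ u ∈ X, p u i = p x i := by
  simp [Finset.Nonempty, mem_block, and_comm]

variable [Fintype ι]

/-- The query family of a labelling: all blocks of all directions. -/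
def blocks (p : V → ι → Q) : Finset (Finset V) := univ.image fun a : ι × V ↦ block p a.1 a.2

theorem block_mem_blocks (p : V → ι → Q) (i : ι) (x : V) : block p i x ∈ blocks p :=
  mem_image_of_mem (fun a : ι × V ↦ block p a.1 a.2) (mem_univ (i, x))

theorem exists_eq_block_of_mem_blocks {F : Finset V} {x : V} (hF : F ∈ blocks p) (hx : x ∈ F) :
    ∃ i, F = block p i x := by
  obtain ⟨⟨i, y⟩, -, rfl⟩ := mem_image.mp hF
  exact ⟨i, by simp only [block, mem_block.mp hx]⟩

theorem QuadrangleFree.isSeparating_blocks (hp : QuadrangleFree p) (hι : 1 < Fintype.card ι) :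
    IsSeparating (Fintype.card ι) (blocks p) := by
  intro X Y hX hY hne
  contrapose! hne
  refine hp.eq_of_forall_meetsBlocksThrough hι hX hY (fun x hx i ↦ ?_) fun y hy i ↦ ?_
  · exact block_inter_nonempty.mp <|
      (hne _ (block_mem_blocks p i x)).1 (block_inter_nonempty.mpr ⟨x, hx, rfl⟩)
  · exact block_inter_nonempty.mp <|
      (hne _ (block_mem_blocks p i y)).2 (block_inter_nonempty.mpr ⟨y, hy, rfl⟩)

theorem QuadrangleFree.hidesDefectives_blocks (hp : QuadrangleFree p) (hthick : HasThickBlocks p)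
    (hremote : HasRemotePoints (Fintype.card ι) p) :
    HidesDefectives (Fintype.card ι) (blocks p) := by
  intro x D hD y hy
  suffices ∃ D' : Finset V, #D' = Fintype.card ι ∧ y ∉ D' ∧
      ∀ i, (∃ u ∈ D, p u i = p x i) ↔ ∃ u ∈ D', p u i = p x i by
    obtain ⟨D', hcard, hyD', h⟩ := this
    refine ⟨D', hcard, hyD', fun F hF hxF ↦ ?_⟩
    obtain ⟨i, rfl⟩ := exists_eq_block_of_mem_blocks hF hxF
    simpa only [block_inter_nonempty] using h i
  obtain rfl | hyx := eq_or_ne y x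
  · obtain ⟨D', hcard, hyD', h⟩ := hp.exists_avoiding_self hthick y
    exact ⟨D', hcard, hyD', fun i ↦ iff_of_true ⟨y, hy, rfl⟩ (h i)⟩
  · rw [← hD] at hremote ⊢
    exact hp.exists_avoiding_of_ne hthick hremote hy hyx

end Blocks

section Construction

variable {V ι κ σ : Type*} [DecidableEq ι] [DecidableEq σ]

/-- The label `(t + e_{i,s}, c)` in direction `i` of the point `(t, c, s)` in copy `c` and layer
`s`, where the `e_{i,s}` are the standard basis vectors. A block has exactly one point in each
layer. The coefficients are taken in `ZMod 3` because quadrangle-freeness needs `1 + 1 ≠ 0`. -/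
def shiftLabel (x : (ι × σ → ZMod 3) × κ × σ) (i : ι) : (ι × σ → ZMod 3) × κ :=
  (x.1 + Pi.single (i, x.2.2) 1, x.2.1)

theorem eq_of_shiftLabel_eq {x y : (ι × σ → ZMod 3) × κ × σ} {i : ι}
    (h : shiftLabel x i = shiftLabel y i) (hs : x.2.2 = y.2.2) : x = y := by
  obtain ⟨ht, hc⟩ := Prod.mk.inj h
  rw [hs] at ht
  exact Prod.ext (add_right_cancel ht) (Prod.ext hc hs)

theorem quadrangleFree_shiftLabel :
    QuadrangleFree (shiftLabel : (ι × σ → ZMod 3) × κ × σ → ι → _) := by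
  intro x y z w i j k l hij hil hxy hyz hzw hwx
  by_contra! h
  have hsxy : x.2.2 ≠ y.2.2 := fun hs ↦ h.1 (eq_of_shiftLabel_eq hxy hs)
  have hsyz : y.2.2 ≠ z.2.2 := fun hs ↦ h.2 (eq_of_shiftLabel_eq hyz hs)
  -- In the coordinate `(i, y.2.2)` the first step contributes `1`, the third one `0` or `1`, and
  -- the other two nothing, so that the contributions cannot cancel.
  have hxy' : x.1 (i, y.2.2) = y.1 (i, y.2.2) + 1 := by
    simpa [shiftLabel, hsxy.symm] using congrFun (congrArg Prod.fst hxy) (i, y.2.2)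
  have hyz' : y.1 (i, y.2.2) = z.1 (i, y.2.2) := by
    simpa [shiftLabel, hij] using congrFun (congrArg Prod.fst hyz) (i, y.2.2)
  have hzw' : z.1 (i, y.2.2) = w.1 (i, y.2.2) + if (i, y.2.2) = (k, w.2.2) then 1 else 0 := by
    simpa [shiftLabel, Pi.single_apply, hsyz] using congrFun (congrArg Prod.fst hzw) (i, y.2.2)
  have hwx' : w.1 (i, y.2.2) = x.1 (i, y.2.2) := by
    simpa [shiftLabel, hil] using congrFun (congrArg Prod.fst hwx) (i, y.2.2)
  have hsum : (if (i, y.2.2) = (k, w.2.2) then 1 else 0) + 1 = (0 : ZMod 3) := by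
    linear_combination -(hxy' + hyz' + hzw' + hwx')
  split_ifs at hsum <;> exact absurd hsum (by decide)

variable {f : V → (ι × σ → ZMod 3) × κ × σ} {S : Finset σ}

theorem hasThickBlocks_shiftLabel (hS : 2 < #S) (hf : ∀ t c, ∀ s ∈ S, (t, c, s) ∈ Set.range f) :
    HasThickBlocks fun v ↦ shiftLabel (f v) := by
  intro i x y
  obtain ⟨s, hsS, hs⟩ : ∃ s ∈ S, s ∉ ({(f x).2.2, (f y).2.2} : Finset σ) :=
    exists_mem_notMem_of_card_lt_card (card_le_two.trans_lt hS)
  obtain ⟨z, hz⟩ := hf ((shiftLabel (f x) i).1 - Pi.single (i, s) 1) (f x).2.1 s hsS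
  have hsz : (f z).2.2 = s := by rw [hz]
  refine ⟨z, by simp [hz, shiftLabel], ?_, ?_⟩ <;>
  · rintro rfl
    simp [hsz] at hs

theorem hasRemotePoints_shiftLabel [Fintype ι] [Fintype σ] [Nontrivial κ] {d : ℕ}
    (hd : d < Fintype.card (ι × σ → ZMod 3)) (hS : S.Nonempty)
    (hf : ∀ t c, ∀ s ∈ S, (t, c, s) ∈ Set.range f) :
    HasRemotePoints d fun v ↦ shiftLabel (f v) := by
  rintro x D rfl
  obtain ⟨s, hs⟩ := hS
  obtain ⟨c, hc⟩ := exists_ne (f x).2.1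
  choose g hg using fun t ↦ hf t c s hs
  have hinj : g.Injective := fun t t' h ↦ congrArg Prod.fst ((hg t).symm.trans (h ▸ hg t'))
  obtain ⟨t, ht⟩ : ∃ t, g t ∉ D := by
    by_contra! h
    exact hd.not_ge (card_le_card_of_injOn g (fun t _ ↦ h t) hinj.injOn)
  exact ⟨g t, ht, fun i h ↦ hc (by simpa [shiftLabel, hg] using congrArg Prod.snd h)⟩

end Construction

theorem exists_injective_subset_range {V P : Type*} [Fintype V] [Fintype P] {S : Finset P}
    (hS : #S ≤ Fintype.card V) (hP : Fintype.card V ≤ Fintype.card P) :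
    ∃ f : V → P, f.Injective ∧ ↑S ⊆ Set.range f := by
  obtain ⟨T, hST, -, hT⟩ := exists_subsuperset_card_eq (subset_univ S) hS hP
  let e : V ≃ T := Fintype.equivOfCardEq (by simp [hT])
  refine ⟨fun v ↦ e v, Subtype.val_injective.comp e.injective, fun x hx ↦ ?_⟩
  exact ⟨e.symm ⟨x, hST hx⟩, by simp⟩

theorem exists_mul_three_le_and_le_mul_four {N n : ℕ} (hN : 0 < N) (hn : 9 * N ≤ n) :
    ∃ m, 2 ≤ m ∧ N * (m * 3) ≤ n ∧ n ≤ N * (m * 4) := by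
  have h3N : 0 < 3 * N := by positivity
  have hm : 3 ≤ n / (3 * N) := (Nat.le_div_iff_mul_le h3N).mpr (by lia)
  have hlower : 3 * N * (n / (3 * N)) ≤ n := Nat.mul_div_le n (3 * N)
  have hupper : n < 3 * N * (n / (3 * N) + 1) := Nat.lt_mul_div_succ n h3N
  exact ⟨n / (3 * N), by lia, by linarith, by nlinarith⟩

theorem exists_quadrangleFree_labelling {V : Type*} {ι : Type u} [Fintype V] [Fintype ι]
    (hV : 9 * 3 ^ (Fintype.card ι * 4) ≤ Fintype.card V) :
    ∃ (Q : Type u) (p : V → ι → Q), QuadrangleFree p ∧ HasThickBlocks p ∧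
      HasRemotePoints (Fintype.card ι) p := by
  classical
  have hcard : Fintype.card (ι × Fin 4 → ZMod 3) = 3 ^ (Fintype.card ι * 4) := by simp [ZMod.card]
  have hι : Fintype.card ι < Fintype.card (ι × Fin 4 → ZMod 3) := by
    rw [hcard]
    exact (Nat.lt_pow_self (by lia)).trans_le (Nat.pow_le_pow_right (by lia) (by lia))
  obtain ⟨m, hm, hlower, hupper⟩ := exists_mul_three_le_and_le_mul_four (by positivity) hV
  have : Nontrivial (Fin m) := Fin.nontrivial_iff_two_le.mpr hm
  let S : Finset (Fin 4) := {0, 1, 2}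
  obtain ⟨f, hinj, hrange⟩ := exists_injective_subset_range
    (V := V) (S := (univ : Finset (ι × Fin 4 → ZMod 3)) ×ˢ (univ : Finset (Fin m)) ×ˢ S)
    (by simpa [hcard, -Fintype.card_pi, S] using hlower)
    (by simpa [hcard, -Fintype.card_pi] using hupper)
  have hf : ∀ t c, ∀ s ∈ S, (t, c, s) ∈ Set.range f := fun t c s hs ↦ hrange (by simp [hs])
  exact ⟨_, fun v ↦ shiftLabel (f v), quadrangleFree_shiftLabel.comp_injective hinj,
    hasThickBlocks_shiftLabel (by decide) hf, hasRemotePoints_shiftLabel hι (by decide) hf⟩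

end GroupTesting

/-- for every `d ≥ 2` and all sufficiently large `n`, Model 3_d has a solution:
a `d`-separating family of subsets of `[n]` such that no single element can identify any
defective. -/
theorem exists_solution_model3d (d : ℕ) (hd : 2 ≤ d) :
    ∃ n₀ : ℕ, ∀ n : ℕ, n₀ ≤ n →
      ∃ 𝓕 : Finset (Finset (Fin n)),
        (∀ X Y : Finset (Fin n), X.card = d → Y.card = d → X ≠ Y →
          ∃ F ∈ 𝓕, ((F ∩ X).Nonempty ∧ ¬ (F ∩ Y).Nonempty) ∨
            ((F ∩ Y).Nonempty ∧ ¬ (F ∩ X).Nonempty)) ∧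
        (∀ x : Fin n, ∀ D : Finset (Fin n), D.card = d → ∀ y ∈ D,
          ∃ D' : Finset (Fin n), D'.card = d ∧ y ∉ D' ∧
            ∀ F ∈ 𝓕, x ∈ F → ((F ∩ D).Nonempty ↔ (F ∩ D').Nonempty)) := by
  refine ⟨9 * 3 ^ (d * 4), fun n hn ↦ ?_⟩
  obtain ⟨Q, p, hp, hthick, hremote⟩ :=
    GroupTesting.exists_quadrangleFree_labelling (V := Fin n) (ι := Fin d) (by simpa using hn)
  have : DecidableEq Q := Classical.decEq Q
  have hseparating := hp.isSeparating_blocks (by rwa [Fintype.card_fin])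
  have hhides := hp.hidesDefectives_blocks hthick hremote
  rw [Fintype.card_fin] at hseparating hhides
  exact ⟨GroupTesting.blocks p, hseparating, hhides⟩
end

section
/- Let 1 ≤ d ≤ n−1, d ≤ i ≤ n, and let 𝓕 be a d-separating family of subsets of [n]. Then it is not the case that every S ⊆ [n] with |S| = i does not know any defective; i.e., there exists an i-element set S, a set D ⊆ [n] with |D| = d and an element y ∈ D such that for every D' ⊆ [n] with |D'| = d and y ∉ D' there is F ∈ 𝓕 with F ∩ S ≠ ∅ for which exactly one of F ∩ D and F ∩ D' is nonempty. -/
/-!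
Among the candidate defective sets choose `D` whose set of positive queries is maximal under
inclusion. A separating family gives distinct candidates distinct sets of positive queries, so by
maximality every other candidate misses some query that meets `D`. Such a query also meets every
`S ⊇ D`, hence each such `S` tells `D` apart from all other candidates and knows all elements of
`D`.
-/

/-- The queries of `𝓕` answered positively when `D` is the set of defectives. It encodes the
information that `𝓕` yields about `D`, so that `𝓕` separates the candidates in `𝒟` exactly when
`positiveQueries 𝓕` is injective on `𝒟`. -/
def positiveQueries {α : Type*} [DecidableEq α] (𝓕 : Set (Finset α)) (D : Finset α) :
    Set (Finset α) :=
  {F ∈ 𝓕 | (F ∩ D).Nonempty}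

theorem exists_mem_forall_ne_not_le_of_injOn {ι β : Type*} [PartialOrder β] {s : Set ι}
    {f : ι → β} (hfin : s.Finite) (hne : s.Nonempty) (hf : s.InjOn f) :
    ∃ a ∈ s, ∀ b ∈ s, b ≠ a → ¬ f a ≤ f b := by
  obtain ⟨a, ha, hmax⟩ := hfin.exists_maximalFor f s hne
  exact ⟨a, ha, fun b hb hba hab => hba (hf hb ha ((hmax hb hab).antisymm hab))⟩

section GroupTesting

variable {α : Type*} [DecidableEq α] {𝓕 : Set (Finset α)}

theorem not_positiveQueries_subset_iff {X Y : Finset α} :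
    ¬ positiveQueries 𝓕 X ⊆ positiveQueries 𝓕 Y ↔
      ∃ F ∈ 𝓕, (F ∩ X).Nonempty ∧ ¬ (F ∩ Y).Nonempty := by
  simp only [Set.not_subset, positiveQueries, Set.mem_sep_iff]
  grind

theorem positiveQueries_ne_iff {X Y : Finset α} :
    positiveQueries 𝓕 X ≠ positiveQueries 𝓕 Y ↔
      ∃ F ∈ 𝓕, ((F ∩ X).Nonempty ∧ ¬ (F ∩ Y).Nonempty) ∨
        ((F ∩ Y).Nonempty ∧ ¬ (F ∩ X).Nonempty) := by
  simp only [ne_eq, Set.Subset.antisymm_iff, not_and_or, not_positiveQueries_subset_iff,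
    and_or_left, exists_or]

theorem i_ge_d_some_set_knows_general {𝒟 : Set (Finset α)} (hfin : 𝒟.Finite)
    (hne : 𝒟.Nonempty) (hsep : 𝒟.InjOn (positiveQueries 𝓕)) :
    ∃ D ∈ 𝒟, ∀ S, D ⊆ S → ∀ D' ∈ 𝒟, D' ≠ D →
      ∃ F ∈ 𝓕, (F ∩ S).Nonempty ∧ (F ∩ D).Nonempty ∧ ¬ (F ∩ D').Nonempty := by
  obtain ⟨D, hD, hmax⟩ := exists_mem_forall_ne_not_le_of_injOn hfin hne hsep
  refine ⟨D, hD, fun S hDS D' hD' hne' => ?_⟩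
  obtain ⟨F, hF, hFD, hFD'⟩ := not_positiveQueries_subset_iff.mp (hmax D' hD' hne')
  exact ⟨F, hF, hFD.mono (Finset.inter_subset_inter_left hDS), hFD, hFD'⟩

end GroupTesting

/-- if `1 ≤ d ≤ n-1`, `d ≤ i ≤ n` and `𝓕` is `d`-separating, then it is not
the case that every `i`-element set does not know any defective: there exist an `i`-element
set `S`, a `d`-set `D` and `y ∈ D` such that for every `d`-set `D'` avoiding `y` some query
intersecting `S` distinguishes `D` from `D'`. -/
theorem i_ge_d_some_set_knows (n d i : ℕ) (hd : 1 ≤ d) (hdn : d ≤ n - 1)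
    (hdi : d ≤ i) (hin : i ≤ n)
    (𝓕 : Finset (Finset (Fin n)))
    (hsep : ∀ X Y : Finset (Fin n), X.card = d → Y.card = d → X ≠ Y →
      ∃ F ∈ 𝓕, ((F ∩ X).Nonempty ∧ ¬ (F ∩ Y).Nonempty) ∨
        ((F ∩ Y).Nonempty ∧ ¬ (F ∩ X).Nonempty)) :
    ∃ S : Finset (Fin n), S.card = i ∧
      ∃ D : Finset (Fin n), D.card = d ∧
        ∃ y ∈ D, ∀ D' : Finset (Fin n), D'.card = d → y ∉ D' →
          ∃ F ∈ 𝓕, (F ∩ S).Nonempty ∧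
            (((F ∩ D).Nonempty ∧ ¬ (F ∩ D').Nonempty) ∨
              ((F ∩ D').Nonempty ∧ ¬ (F ∩ D).Nonempty)) := by
  have hne : {X : Finset (Fin n) | X.card = d}.Nonempty :=
    (Finset.exists_subset_card_eq (s := Finset.univ) (by simpa using hdi.trans hin)).imp
      fun _ => And.right
  have hinj : {X : Finset (Fin n) | X.card = d}.InjOn (positiveQueries (𝓕 : Set _)) :=
    fun X hX Y hY => not_imp_not.mp fun hXY => positiveQueries_ne_iff.mpr (hsep X Y hX hY hXY)
  obtain ⟨D, hDcard, hD⟩ := i_ge_d_some_set_knows_general (Set.toFinite _) hne hinj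
  obtain ⟨S, hDS, hScard⟩ := Finset.exists_superset_card_eq
    (hDcard.trans_le hdi) (by simpa using hin)
  obtain ⟨y, hy⟩ : D.Nonempty := Finset.card_pos.mp (hd.trans_eq hDcard.symm)
  refine ⟨S, hScard, D, hDcard, y, hy, fun D' hD'card hyD' => ?_⟩
  obtain ⟨F, hF, hFS, hFDD'⟩ := hD S hDS D' hD'card (ne_of_mem_of_not_mem' hy hyD').symm
  exact ⟨F, hF, hFS, .inl hFDD'⟩
end

section
/- Let 1 ≤ d ≤ n−1. Then there is no family 𝓕 of subsets of [n] such that simultaneously every S ⊆ [n] with |S| = d knows the defectives and every singleton {x} (x ∈ [n]) does not know any defective. (That is, Model 4_d has no solution when j = d.) -/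
/-!
If every `d`-set knows the defectives, then `𝓕` is `d`-disjunct: given a `d`-set `D` and `y ∉ D`,
exchange an element of `D` for `y` to get a `d`-set `S`. Since `S` knows the defectives, some test
meeting `S` tells `S` and `D` apart. That test meets `S`, so it misses `D`; as `S \ {y} ⊆ D`, it
contains `y`. In a `d`-disjunct family, every defective element `y` recognises itself: a
candidate set without `y` is refuted by a test that contains `y` and misses the candidate.
-/

section GroupTesting

open scoped Finset

theorem exists_finset_mem_card_eq {α : Type*} {d : ℕ} (hd : d ≠ 0)
    (hcard : (d : ℕ∞) ≤ ENat.card α) (x : α) : ∃ D : Finset α, x ∈ D ∧ #D = d := by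
  have hone : ({x} : Set α).encard ≤ d := by
    rw [Set.encard_singleton]
    exact_mod_cast Nat.one_le_iff_ne_zero.mpr hd
  obtain ⟨D, hxD, -, hD⟩ := Set.exists_superset_subset_encard_eq (Set.subset_univ {x}) hone
    (by rwa [Set.encard_univ])
  lift D to Finset α using Set.finite_of_encard_eq_coe hD
  exact ⟨D, by simpa using hxD, by simpa using hD⟩

variable {α : Type*} [DecidableEq α] {𝓕 : Set (Finset α)} {d : ℕ} {S D D' : Finset α} {y : α}

/-- `S` knows the defectives: the members of `S`, who see the outcomes of exactly those tests of
`𝓕` that meet `S`, can tell any two candidate defective sets of size `d` apart. The outcome of a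
test `F` for the defective set `D` is encoded as the proposition `(F ∩ D).Nonempty`. -/
def KnowsDefectives (𝓕 : Set (Finset α)) (d : ℕ) (S : Finset α) : Prop :=
  ∀ D D' : Finset α, #D = d → #D' = d → D ≠ D' →
    ∃ F ∈ 𝓕, (F ∩ S).Nonempty ∧ Xor (F ∩ D).Nonempty (F ∩ D').Nonempty

/-- `S` does not know any defective: whatever the defective set `D` and `y ∈ D` are, the outcomes
of the tests meeting `S` are consistent with a defective set of size `d` that avoids `y`. -/
def KnowsNoDefective (𝓕 : Set (Finset α)) (d : ℕ) (S : Finset α) : Prop :=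
  ∀ D : Finset α, #D = d → ∀ y ∈ D, ∃ D' : Finset α, #D' = d ∧ y ∉ D' ∧
    ∀ F ∈ 𝓕, (F ∩ S).Nonempty → ((F ∩ D).Nonempty ↔ (F ∩ D').Nonempty)

/-- `𝓕` is `d`-disjunct, in the sense of combinatorial group testing: every element outside a
`d`-set lies in a test that misses the `d`-set. -/
def IsDisjunct (𝓕 : Set (Finset α)) (d : ℕ) : Prop :=
  ∀ D : Finset α, #D = d → ∀ y ∉ D, ∃ F ∈ 𝓕, y ∈ F ∧ Disjoint F D

theorem isDisjunct_of_forall_knowsDefectives (hd : d ≠ 0)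
    (hknow : ∀ S : Finset α, #S = d → KnowsDefectives 𝓕 d S) : IsDisjunct 𝓕 d := by
  intro D hD y hy
  obtain ⟨z, hz⟩ : D.Nonempty := Finset.card_ne_zero.mp (hD ▸ hd)
  have hcard : #(insert y (D.erase z)) = d := by
    rw [Finset.card_insert_of_notMem (mt Finset.mem_of_mem_erase hy),
      Finset.card_erase_add_one hz, hD]
  have hne : insert y (D.erase z) ≠ D := fun h => hy (h ▸ Finset.mem_insert_self y _)
  obtain ⟨F, hF, hFS, hxor⟩ := hknow _ hcard _ D hcard hD hne
  have hFD : Disjoint F D := by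
    rw [Finset.disjoint_iff_inter_eq_empty, ← Finset.not_nonempty_iff_eq_empty]
    exact (xor_iff_iff_not.mp hxor).mp hFS
  obtain ⟨w, hw⟩ := hFS
  obtain ⟨hwF, hwS⟩ := Finset.mem_inter.mp hw
  obtain rfl | hwD := Finset.mem_insert.mp hwS
  · exact ⟨F, hF, hwF, hFD⟩
  · exact absurd (Finset.mem_of_mem_erase hwD) (Finset.disjoint_left.mp hFD hwF)

theorem IsDisjunct.mem_of_outcomes_eq (h𝓕 : IsDisjunct 𝓕 d) (hD' : #D' = d) (hyS : y ∈ S)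
    (hyD : y ∈ D)
    (heq : ∀ F ∈ 𝓕, (F ∩ S).Nonempty → ((F ∩ D).Nonempty ↔ (F ∩ D').Nonempty)) : y ∈ D' := by
  by_contra hyD'
  obtain ⟨F, hF, hyF, hFD'⟩ := h𝓕 D' hD' y hyD'
  have hFS : (F ∩ S).Nonempty := ⟨y, Finset.mem_inter.mpr ⟨hyF, hyS⟩⟩
  have hFD : (F ∩ D).Nonempty := ⟨y, Finset.mem_inter.mpr ⟨hyF, hyD⟩⟩
  exact Finset.not_disjoint_iff_nonempty_inter.mpr ((heq F hF hFS).mp hFD) hFD'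

theorem no_solution_j_eq_d_general (hd : d ≠ 0) (hcard : (d : ℕ∞) ≤ ENat.card α)
    (hknow : ∀ S : Finset α, #S = d → KnowsDefectives 𝓕 d S) (hS : S.Nonempty) :
    ¬ KnowsNoDefective 𝓕 d S := by
  intro hnot
  obtain ⟨y, hyS⟩ := hS
  obtain ⟨D, hyD, hD⟩ := exists_finset_mem_card_eq hd hcard y
  obtain ⟨D', hD', hyD', heq⟩ := hnot D hD y hyD
  exact hyD' ((isDisjunct_of_forall_knowsDefectives hd hknow).mem_of_outcomes_eq hD' hyS hyD heq)

end GroupTesting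

/-- for `1 ≤ d ≤ n-1` there is no family `𝓕` of subsets of `[n]` such that
every `d`-element set knows the defectives while no singleton knows any defective
(Model 4_d has no solution when `j = d`). -/
theorem no_solution_j_eq_d (n d : ℕ) (hd : 1 ≤ d) (hdn : d ≤ n - 1) :
    ¬ ∃ 𝓕 : Finset (Finset (Fin n)),
      (∀ S : Finset (Fin n), S.card = d →
        ∀ D D' : Finset (Fin n), D.card = d → D'.card = d → D ≠ D' →
          ∃ F ∈ 𝓕, (F ∩ S).Nonempty ∧
            (((F ∩ D).Nonempty ∧ ¬ (F ∩ D').Nonempty) ∨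
              ((F ∩ D').Nonempty ∧ ¬ (F ∩ D).Nonempty))) ∧
      (∀ x : Fin n, ∀ D : Finset (Fin n), D.card = d → ∀ y ∈ D,
        ∃ D' : Finset (Fin n), D'.card = d ∧ y ∉ D' ∧
          ∀ F ∈ 𝓕, (F ∩ {x}).Nonempty →
            ((F ∩ D).Nonempty ↔ (F ∩ D').Nonempty)) := by
  rintro ⟨𝓕, hknow, hnot⟩
  have hcard : (d : ℕ∞) ≤ ENat.card (Fin n) := by
    simpa using (show d ≤ n by omega)
  exact no_solution_j_eq_d_general (𝓕 := (𝓕 : Set (Finset (Fin n)))) (by omega) hcard hknow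
    (Finset.singleton_nonempty ⟨0, by omega⟩) (hnot _)
end

section
/- For all integers d ≥ 2 and r, g ≥ 3 there exists N such that for every n ≥ N with r dividing d·n there is a family 𝓕 of subsets of [n] with the following properties: every member of 𝓕 has exactly r elements; every element of [n] belongs to exactly d members of 𝓕; any two distinct members of 𝓕 intersect in at most one element; and 𝓕 has Berge-girth at least g, i.e. for every k with 2 ≤ k ≤ g−1 there do not exist k pairwise distinct members E_1,…,E_k of 𝓕 and k pairwise distinct elements x_1,…,x_k of [n] such that x_i ∈ E_i and x_{i+1} ∈ E_i for all 1 ≤ i ≤ k (indices taken modulo k, so x_1 ∈ E_k). -/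
/-!
A hypergraph is identified with its bipartite incidence graph, in which a Berge cycle of length `k`
is a cycle of length `2 * k`; so one needs bipartite graphs with prescribed degrees and large girth.
Suppose that `G` has such degrees, that its girth exceeds `T`, and that `ab` is an edge on a cycle
of length `T + 1`. Degrees being bounded, a large enough `G` has an edge `cd` far from `ab`.
Replacing `ab` and `cd` by `ad` and `cb` keeps all degrees. The new edges lie on no cycle of length
at most `T + 1`: such a cycle would contain a short path between `ab` and `cd`, or a path from `a`
to `b` which together with `ab` is itself a cycle. So no cycle of length at most `T + 1` is created,
while `ab` is gone. Repeating this destroys all cycles of length `T + 1`, and then `T` is increased.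
-/

open Finset SimpleGraph

namespace BergeGirth

section Detour

variable {V : Type*} {G H : SimpleGraph V} {u v w x y p q : V}

theorem edist_le_edist_add_one (h : G.Adj u w) (v : V) : G.edist u v ≤ G.edist w v + 1 := by
  rw [add_comm, ← edist_eq_one_iff_adj.2 h]
  exact G.edist_triangle

theorem edist_le_edist_add_one_add_edist (h : G.Adj x y) (p q : V) :
    G.edist p q ≤ G.edist x p + 1 + G.edist q y := by
  calc G.edist p q ≤ G.edist p x + G.edist x q := G.edist_triangle
    _ ≤ G.edist p x + (G.edist y q + 1) := by grw [edist_le_edist_add_one h]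
    _ = G.edist x p + 1 + G.edist q y := by
      rw [G.edist_comm, G.edist_comm (u := y), add_comm _ 1, add_assoc]

theorem min_le_edist_sup_edge (G : SimpleGraph V) (u v p q : V) :
    min (G.edist u v) (min (G.edist u p + 1 + G.edist q v) (G.edist u q + 1 + G.edist p v)) ≤
      (G ⊔ edge p q).edist u v := by
  -- A shortest walk uses the edge `pq` at most once, in one of its two directions.
  refine le_iInf fun walk ↦ ?_
  induction walk with
  | nil => simp
  | @cons u w v h walk ih =>
    rw [Walk.length_cons, Nat.cast_add_one]
    refine le_trans ?_ (add_le_add_left ih 1)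
    simp only [min_add]
    rcases h with h | h
    · refine min_le_min (edist_le_edist_add_one h v) (min_le_min ?_ ?_) <;>
        grw [edist_le_edist_add_one h] <;> exact (by ring : _ = _).le
    · have via_edge : 1 + G.edist w v ≤ G.edist w u + 1 + G.edist w v + 1 := by
        rw [add_assoc (G.edist w u)]
        exact le_add_self.trans le_self_add
      have skip_edge : G.edist u v ≤ 1 + G.edist u v + 1 := by
        rw [add_right_comm]
        exact le_add_self
      obtain ⟨⟨rfl, rfl⟩ | ⟨rfl, rfl⟩, -⟩ := (edge_adj ..).1 h <;>
        simp only [SimpleGraph.edist_self, zero_add, le_min_iff, min_le_iff]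
      · exact ⟨.inr (.inl (add_comm ..).le), .inr (.inl via_edge), .inl skip_edge⟩
      · exact ⟨.inr (.inr (add_comm ..).le), .inl skip_edge, .inr (.inr via_edge)⟩

/-- The length of a shortest walk from `u` to `v` avoiding the edge `uv`. If `uv` is an edge, this
is one less than the length of a shortest cycle through it. -/
noncomputable def detour (G : SimpleGraph V) (u v : V) : ℕ∞ :=
  (G \ edge u v).edist u v

theorem detour_comm : detour G u v = detour G v u := by
  rw [detour, detour, edge_comm, edist_comm]

theorem detour_congr (h : s(x, y) = s(p, q)) : detour G x y = detour G p q := by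
  obtain ⟨rfl, rfl⟩ | ⟨rfl, rfl⟩ := Sym2.eq_iff.1 h
  exacts [rfl, detour_comm]

theorem detour_anti (h : G ≤ H) : detour H u v ≤ detour G u v :=
  edist_anti (sdiff_le_sdiff_right h)

theorem one_le_detour (h : u ≠ v) : 1 ≤ detour G u v :=
  Order.one_le_iff_ne_zero.2 (edist_pos_of_ne h).ne'

theorem detour_sdiff_edge_le (hxy : G.Adj x y) (hlt : detour G x y < detour G p q) :
    detour (G \ edge p q) x y ≤ detour G x y := by
  -- A shortest detour of `xy` through `pq`, closed up by `xy`, would contain a detour of `pq` that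
  -- is no longer.
  set K := (G \ edge p q) \ edge x y
  have hK : G \ edge x y ≤ K ⊔ edge p q := by
    rw [← sdiff_le_iff', sdiff_right_comm]
  have hxy' : (G \ edge p q).Adj x y :=
    ⟨hxy, fun he ↦ hlt.ne (detour_congr ((adj_edge ..).1 he).1.symm)⟩
  have hpq : detour G p q ≤ K.edist x p + 1 + K.edist q y := by
    grw [detour, edist_le_edist_add_one_add_edist hxy' p q]
    gcongr <;> exact sdiff_le
  have hqp : detour G p q ≤ K.edist x q + 1 + K.edist p y := by
    grw [detour, SimpleGraph.edist_comm, edist_le_edist_add_one_add_edist hxy' q p]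
    gcongr <;> exact sdiff_le
  have hmin := (min_le_edist_sup_edge K x y p q).trans (edist_anti hK)
  rw [min_le_iff, min_le_iff] at hmin
  rcases hmin with h | h | h
  · exact h
  · exact absurd (h.trans_lt hlt) hpq.not_gt
  · exact absurd (h.trans_lt hlt) hqp.not_gt

theorem egirth_le_detour_add_one (h : G.Adj u v) : G.egirth ≤ detour G u v + 1 := by
  classical
  by_cases htop : detour G u v = ⊤
  · simp [htop]
  obtain ⟨walk, hwalk⟩ := exists_walk_of_edist_ne_top (edist_comm.trans_ne htop)
  have hcycle : (Walk.cons h (walk.bypass.mapLe sdiff_le)).IsCycle := by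
    refine (Walk.cons_isCycle_iff _ _).2 ⟨by simp [walk.bypass_isPath], fun hmem ↦ ?_⟩
    have := walk.bypass.edges_subset_edgeSet (by simpa using hmem)
    simp at this
  calc G.egirth ≤ _ := egirth_le_length hcycle
    _ ≤ (walk.length : ℕ∞) + 1 := by simpa using mod_cast walk.length_bypass_le_length
    _ = _ := by rw [hwalk, edist_comm]; rfl

theorem exists_detour_add_one_le_length {w : G.Walk u u} (hw : w.IsCycle) :
    ∃ x y, G.Adj x y ∧ detour G x y + 1 ≤ w.length := by
  cases w with
  | nil => simp at hw
  | @cons _ v _ h path =>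
    obtain ⟨-, hedge⟩ := (Walk.cons_isCycle_iff _ _).1 hw
    refine ⟨v, u, h.symm, ?_⟩
    rw [Walk.length_cons, Nat.cast_add_one]
    gcongr
    have havoid : ∀ e ∈ path.edges, e ∈ (G \ edge v u).edgeSet := by
      intro e he
      rw [edgeSet_sdiff, edgeSet_edge_of_ne h.ne']
      refine ⟨path.edges_subset_edgeSet he, ?_⟩
      rintro rfl
      exact hedge (Sym2.eq_swap ▸ he)
    simpa [detour] using edist_le (path.transfer (G \ edge v u) havoid)

theorem natCast_lt_egirth_iff {T : ℕ} :
    (T : ℕ∞) < G.egirth ↔ ∀ ⦃u v⦄, G.Adj u v → T ≤ detour G u v := by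
  rw [← ENat.add_one_le_iff (ENat.natCast_ne_top T)]
  constructor
  · intro hT u v huv
    have := hT.trans (egirth_le_detour_add_one huv)
    simpa using this
  · intro hT
    refine le_egirth.2 fun u w hw ↦ ?_
    obtain ⟨x, y, hxy, hle⟩ := exists_detour_add_one_le_length hw
    exact (add_le_add_left (hT hxy) 1).trans hle

end Detour

section Switch

variable {V : Type*} {G : SimpleGraph V} {T : ℕ} {a b c d x y : V}

/-- The switching operation on the edges `ab` and `cd`: they are replaced by `ad` and `cb`. -/
def switch (G : SimpleGraph V) (a b c d : V) : SimpleGraph V :=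
  G \ (edge a b ⊔ edge c d) ⊔ (edge a d ⊔ edge c b)

theorem switch_flip : switch G b a d c = switch G a b c d := by
  rw [switch, switch, edge_comm b a, edge_comm d c, edge_comm b c, edge_comm d a,
    sup_comm (edge c b)]

/-- The ordered pairs forming an edge of `G` with detour at most `T`, that is, the darts lying on a
cycle of length at most `T + 1`. -/
def shortEdges (G : SimpleGraph V) (T : ℕ) : Set (V × V) :=
  {e | G.Adj e.1 e.2 ∧ detour G e.1 e.2 ≤ T}

/-- Two edges `ab` and `cd` of `G` whose ends are at pairwise distance more than `T`. -/
structure FarEdges (G : SimpleGraph V) (T : ℕ) (a b c d : V) : Prop where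
  adj_left : G.Adj a b
  adj_right : G.Adj c d
  lt_edist : ∀ x ∈ s(a, b), ∀ y ∈ s(c, d), T < G.edist x y

namespace FarEdges

theorem swap_right (h : FarEdges G T a b c d) : FarEdges G T a b d c :=
  ⟨h.adj_left, h.adj_right.symm, Sym2.eq_swap (a := c) ▸ h.lt_edist⟩

theorem swap_left (h : FarEdges G T a b c d) : FarEdges G T b a c d :=
  ⟨h.adj_left.symm, h.adj_right, Sym2.eq_swap (a := a) ▸ h.lt_edist⟩

theorem flip (h : FarEdges G T a b c d) : FarEdges G T b a d c :=
  h.swap_left.swap_right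

theorem ne (h : FarEdges G T a b c d) (hx : x ∈ s(a, b)) (hy : y ∈ s(c, d)) : x ≠ y := by
  rintro rfl
  simpa using h.lt_edist x hx x hy

theorem not_adj (h : FarEdges G T a b c d) (hT : 1 ≤ T) (hx : x ∈ s(a, b)) (hy : y ∈ s(c, d)) :
    ¬ G.Adj x y := fun hxy ↦ by
  have := h.lt_edist x hx y hy
  rw [edist_eq_one_iff_adj.2 hxy] at this
  exact absurd (mod_cast this) hT.not_gt

theorem lt_detour_switch_left (h : FarEdges G T a b c d) (hT : T < G.egirth) :
    T < detour (switch G a b c d) a d := by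
  -- A walk from `a` to `d` that uses neither `ad` nor `cb` is long because `a` and `d` are far. One
  -- through `cb` first goes from `a` to `c`, which is far, or from `a` to `b` avoiding `ab`, and
  -- the latter takes at least `T` steps.
  set K := G \ (edge a b ⊔ edge c d)
  have hKG : K ≤ G := sdiff_le
  have hK : K ≤ G \ edge a b := sdiff_le_sdiff_left le_sup_left
  have hsub : switch G a b c d \ edge a d ≤ K ⊔ edge c b := by
    rw [switch, sup_left_comm]
    exact sup_sdiff_left_self.trans_le sdiff_le
  have had : T < K.edist a d := (h.lt_edist a (by simp) d (by simp)).trans_le (edist_anti hKG)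
  have hac : T < K.edist a c := (h.lt_edist a (by simp) c (by simp)).trans_le (edist_anti hKG)
  have hab : T ≤ K.edist a b :=
    (natCast_lt_egirth_iff.1 hT h.adj_left).trans (edist_anti hK)
  refine lt_of_lt_of_le ?_ ((min_le_edist_sup_edge K a d c b).trans (edist_anti hsub))
  refine lt_min had (lt_min (hac.trans_le (by rw [add_assoc]; exact le_self_add)) ?_)
  exact ((ENat.add_one_le_iff (ENat.natCast_ne_top T)).1 (add_le_add_left hab 1)).trans_le
    le_self_add

theorem lt_detour_switch_right (h : FarEdges G T a b c d) (hT : T < G.egirth) :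
    T < detour (switch G a b c d) c b := by
  rw [detour_comm, ← switch_flip]
  exact h.flip.lt_detour_switch_left hT

theorem detour_le_detour_switch (h : FarEdges G T a b c d) (hT : T < G.egirth)
    (hxy : (switch G a b c d).Adj x y) (hle : detour (switch G a b c d) x y ≤ T) :
    G.Adj x y ∧ s(x, y) ≠ s(a, b) ∧ detour G x y ≤ detour (switch G a b c d) x y := by
  set G' := switch G a b c d with hG'
  have had : detour G' x y < detour G' a d := hle.trans_lt (h.lt_detour_switch_left hT)
  have hcb : detour G' x y < detour G' c b := hle.trans_lt (h.lt_detour_switch_right hT)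
  have hadj : (G' \ edge a d).Adj x y :=
    ⟨hxy, fun he ↦ had.ne (detour_congr ((adj_edge ..).1 he).1.symm)⟩
  have hadj' : ((G' \ edge a d) \ edge c b).Adj x y :=
    ⟨hadj, fun he ↦ hcb.ne (detour_congr ((adj_edge ..).1 he).1.symm)⟩
  have hsub : (G' \ edge a d) \ edge c b ≤ G \ (edge a b ⊔ edge c d) := by
    rw [sdiff_sdiff, hG', switch, sup_sdiff_right_self]
    exact sdiff_le
  obtain ⟨hG, hold⟩ := hsub hadj'
  refine ⟨hG, fun he ↦ hold (.inl ((adj_edge ..).2 ⟨he.symm, hxy.ne⟩)), ?_⟩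
  have hdel := detour_sdiff_edge_le hxy had
  calc detour G x y ≤ detour ((G' \ edge a d) \ edge c b) x y := detour_anti (hsub.trans sdiff_le)
    _ ≤ detour (G' \ edge a d) x y :=
      detour_sdiff_edge_le hadj (hdel.trans_lt (hcb.trans_le (detour_anti sdiff_le)))
    _ ≤ detour G' x y := hdel

theorem shortEdges_switch_ssubset (h : FarEdges G T a b c d) (hT : T < G.egirth)
    (hab : (a, b) ∈ shortEdges G T) : shortEdges (switch G a b c d) T ⊂ shortEdges G T := by
  refine ssubset_of_subset_of_ne (fun e he ↦ ?_) fun heq ↦ ?_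
  · obtain ⟨hadj, -, hle⟩ := h.detour_le_detour_switch hT he.1 he.2
    exact ⟨hadj, hle.trans he.2⟩
  · rw [← heq] at hab
    exact (h.detour_le_detour_switch hT hab.1 hab.2).2.1 rfl

theorem lt_egirth_switch (h : FarEdges G T a b c d) (hT : T < G.egirth) :
    T < (switch G a b c d).egirth := by
  refine natCast_lt_egirth_iff.2 fun x y hxy ↦ ?_
  rcases le_total (detour (switch G a b c d) x y) T with hle | hge
  · obtain ⟨hadj, -, hdetour⟩ := h.detour_le_detour_switch hT hxy hle
    exact (natCast_lt_egirth_iff.1 hT hadj).trans hdetour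
  · exact hge

end FarEdges

end Switch

section Degree

variable {V : Type*} {G H : SimpleGraph V} {s t : Set V} {T : ℕ} {a b c d u v w : V}

theorem encard_neighborSet_sup_of_disjoint (h : Disjoint G H) (w : V) :
    ((G ⊔ H).neighborSet w).encard = (G.neighborSet w).encard + (H.neighborSet w).encard := by
  rw [neighborSet_sup, Set.encard_union_eq (disjoint_neighborSet.2 h w)]

theorem encard_neighborSet_edge [DecidableEq V] (h : u ≠ v) (w : V) :
    ((edge u v).neighborSet w).encard =
      (if w = u then 1 else 0) + (if w = v then 1 else 0) := by
  have hnbr : (edge u v).neighborSet w = if w = u then {v} else if w = v then {u} else ∅ := by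
    ext x
    grind [mem_neighborSet]
  rw [hnbr]
  split_ifs <;> simp_all

theorem FarEdges.encard_neighborSet_switch (h : FarEdges G T a b c d) (hT : 1 ≤ T) (w : V) :
    ((switch G a b c d).neighborSet w).encard = (G.neighborSet w).encard := by
  classical
  have hac : a ≠ c := h.ne (by simp) (by simp)
  have had : a ≠ d := h.ne (by simp) (by simp)
  have hbc : b ≠ c := h.ne (by simp) (by simp)
  have hold : edge a b ⊔ edge c d ≤ G :=
    sup_le ((edge_le_iff _).2 (.inr h.adj_left)) ((edge_le_iff _).2 (.inr h.adj_right))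
  have hnew : Disjoint (G \ (edge a b ⊔ edge c d)) (edge a d ⊔ edge c b) := by
    refine Disjoint.mono_left sdiff_le (disjoint_sup_right.2 ⟨?_, ?_⟩)
    · exact (disjoint_edge _).2 (h.not_adj hT (by simp) (by simp))
    · exact (disjoint_edge _).2 fun hcb ↦ h.not_adj hT (by simp) (by simp) hcb.symm
  have hab_cd : Disjoint (edge a b) (edge c d) := by
    simp [disjoint_edge, edge_adj, hac.symm, hbc.symm]
  have had_cb : Disjoint (edge a d) (edge c b) := by
    simp [disjoint_edge, edge_adj, hac.symm, h.adj_right.ne]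
  conv_rhs => rw [← sdiff_sup_cancel hold]
  simp only [switch, encard_neighborSet_sup_of_disjoint hnew,
    encard_neighborSet_sup_of_disjoint had_cb, encard_neighborSet_sup_of_disjoint hab_cd,
    encard_neighborSet_sup_of_disjoint disjoint_sdiff_self_left,
    encard_neighborSet_edge h.adj_left.ne, encard_neighborSet_edge h.adj_right.ne,
    encard_neighborSet_edge had, encard_neighborSet_edge hbc.symm]
  ring

theorem isBipartiteWith_switch (hG : G.IsBipartiteWith s t) (ha : a ∈ s) (hb : b ∈ t) (hc : c ∈ s)
    (hd : d ∈ t) : (switch G a b c d).IsBipartiteWith s t := by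
  refine ⟨hG.disjoint, fun x y hxy ↦ ?_⟩
  rcases hxy with hxy | hxy | hxy
  · exact hG.mem_of_adj hxy.1
  all_goals grind

/-- `G` is a bipartite graph with parts `s` and `t` in which every vertex `v` has degree `f v`. The
degree is an `encard` so that no finiteness instance for `G` is needed. -/
structure IsRealization (s t : Set V) (f : V → ℕ∞) (G : SimpleGraph V) : Prop where
  isBipartiteWith : G.IsBipartiteWith s t
  encard_neighborSet : ∀ v, (G.neighborSet v).encard = f v

protected theorem IsRealization.switch {f : V → ℕ∞} (hG : IsRealization s t f G)
    (h : FarEdges G T a b c d) (hT : 1 ≤ T) (ha : a ∈ s) (hb : b ∈ t) (hc : c ∈ s) (hd : d ∈ t) :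
    IsRealization s t f (switch G a b c d) :=
  ⟨isBipartiteWith_switch hG.isBipartiteWith ha hb hc hd,
    fun v ↦ (h.encard_neighborSet_switch hT v).trans (hG.encard_neighborSet v)⟩

end Degree

section Existence

variable {V : Type*} {G : SimpleGraph V} {s t : Set V} {f : V → ℕ∞} {T Δ : ℕ} {a b : V}

theorem ball_add_one_subset (G : SimpleGraph V) (u : V) {k : ℕ∞} (hk : 1 ≤ k) :
    G.ball u (k + 1) ⊆ ⋃ v ∈ G.ball u k, insert v (G.neighborSet v) := by
  intro v hv
  obtain ⟨walk, hwalk⟩ := exists_walk_of_edist_ne_top (hv.trans_le le_top).ne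
  rw [mem_ball, ← hwalk] at hv
  simp only [Set.mem_iUnion, Set.mem_insert_iff, mem_neighborSet]
  cases walk with
  | nil => exact ⟨_, mem_ball_self (zero_lt_one.trans_le hk), .inl rfl⟩
  | @cons _ w _ h walk =>
    rw [Walk.length_cons, Nat.cast_add_one, ENat.add_lt_add_iff_right ENat.one_ne_top] at hv
    exact ⟨w, (edist_le walk).trans_lt hv, .inr h.symm⟩

theorem encard_ball_le (hΔ : ∀ v, (G.neighborSet v).encard ≤ Δ) (u : V) (k : ℕ) :
    (G.ball u (k + 1)).encard ≤ ((Δ + 1) ^ k : ℕ) := by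
  induction k with
  | zero => simp
  | succ k ih =>
    have hfin : (G.ball u (k + 1)).Finite := Set.finite_of_encard_le_coe ih
    calc (G.ball u ((k + 1 : ℕ) + 1)).encard
        ≤ (⋃ v ∈ hfin.toFinset, insert v (G.neighborSet v)).encard := by
          simpa using Set.encard_le_encard (ball_add_one_subset G u (k := k + 1) le_add_self)
      _ ≤ ∑ v ∈ hfin.toFinset, (insert v (G.neighborSet v)).encard := set_encard_biUnion_le _ _
      _ ≤ ∑ v ∈ hfin.toFinset, ((Δ + 1 : ℕ) : ℕ∞) := by
          gcongr with v
          grw [Set.encard_insert_le, hΔ v, Nat.cast_add_one]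
      _ = (G.ball u (k + 1)).encard * (Δ + 1 : ℕ) := by
          rw [sum_const, nsmul_eq_mul, hfin.encard_eq_coe_toFinset_card]
      _ ≤ ((Δ + 1) ^ (k + 1) : ℕ) := by
          grw [ih, pow_succ, Nat.cast_mul]

theorem exists_farEdges (hpos : ∀ v, (G.neighborSet v).Nonempty)
    (hΔ : ∀ v, (G.neighborSet v).encard ≤ Δ)
    (hcard : (2 * (Δ + 1) ^ (T + 1) : ℕ) < ENat.card V) (hab : G.Adj a b) :
    ∃ c d, FarEdges G T a b c d := by
  have hballs : (G.ball a ((T + 1 : ℕ) + 1) ∪ G.ball b ((T + 1 : ℕ) + 1)).encard < ENat.card V := by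
    grw [Set.encard_union_le, encard_ball_le hΔ, encard_ball_le hΔ, ← Nat.cast_add, ← two_mul]
    exact hcard
  obtain ⟨c, hc⟩ : ∃ c, c ∉ G.ball a ((T + 1 : ℕ) + 1) ∪ G.ball b ((T + 1 : ℕ) + 1) := by
    by_contra! hall
    rw [Set.eq_univ_of_forall hall, Set.encard_univ] at hballs
    exact hballs.false
  obtain ⟨d, hd⟩ := hpos c
  have hfar : ∀ x ∈ s(a, b), T < G.edist x c ∧ T < G.edist x d := by
    intro x hx
    have hxc : ((T + 1 : ℕ) : ℕ∞) + 1 ≤ G.edist c x := by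
      simp only [Set.mem_union, mem_ball, not_or, not_lt] at hc
      obtain rfl | rfl := Sym2.mem_iff.1 hx
      exacts [hc.1, hc.2]
    have hxd : ((T + 1 : ℕ) : ℕ∞) ≤ G.edist d x :=
      (ENat.add_le_add_iff_right ENat.one_ne_top).1 (hxc.trans (edist_le_edist_add_one hd x))
    rw [G.edist_comm, G.edist_comm (u := x)]
    rw [Nat.cast_add_one] at hxc hxd
    have hlt {m : ℕ∞} : (T : ℕ∞) + 1 ≤ m → T < m := (ENat.add_one_le_iff (by simp)).1
    exact ⟨hlt (le_self_add.trans hxc), hlt hxd⟩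
  refine ⟨c, d, hab, hd, fun x hx y hy ↦ ?_⟩
  obtain rfl | rfl := Sym2.mem_iff.1 hy
  exacts [(hfar x hx).1, (hfar x hx).2]

namespace IsRealization

protected theorem exists_farEdges (hG : IsRealization s t f G) (hpos : ∀ v, f v ≠ 0)
    (hΔ : ∀ v, f v ≤ Δ) (hcard : (2 * (Δ + 1) ^ (T + 1) : ℕ) < ENat.card V) (hab : G.Adj a b) :
    ∃ c ∈ s, ∃ d ∈ t, FarEdges G T a b c d := by
  simp only [← hG.encard_neighborSet, ne_eq, Set.encard_eq_zero, ← Set.nonempty_iff_ne_empty]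
    at hpos hΔ
  obtain ⟨c, d, h⟩ := BergeGirth.exists_farEdges hpos hΔ hcard hab
  obtain ⟨hc, hd⟩ | ⟨hc, hd⟩ := hG.isBipartiteWith.mem_of_adj h.adj_right
  exacts [⟨c, hc, d, hd, h⟩, ⟨d, hd, c, hc, h.swap_right⟩]

theorem exists_shortEdges_ssubset (hG : IsRealization s t f G) (hpos : ∀ v, f v ≠ 0)
    (hΔ : ∀ v, f v ≤ Δ) (hcard : (2 * (Δ + 1) ^ (T + 1) : ℕ) < ENat.card V) (hT : T < G.egirth)
    (hshort : (shortEdges G T).Nonempty) :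
    ∃ H, IsRealization s t f H ∧ T < H.egirth ∧ shortEdges H T ⊂ shortEdges G T := by
  obtain ⟨a, b, ha, hb, hab⟩ : ∃ a b, a ∈ s ∧ b ∈ t ∧ (a, b) ∈ shortEdges G T := by
    obtain ⟨⟨a, b⟩, hab, hle⟩ := hshort
    obtain ⟨ha, hb⟩ | ⟨ha, hb⟩ := hG.isBipartiteWith.mem_of_adj hab
    exacts [⟨a, b, ha, hb, hab, hle⟩, ⟨b, a, hb, ha, hab.symm, detour_comm.trans_le hle⟩]
  have hT1 : 1 ≤ T := mod_cast (one_le_detour hab.1.ne).trans hab.2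
  obtain ⟨c, hc, d, hd, h⟩ := hG.exists_farEdges hpos hΔ hcard hab.1
  exact ⟨switch G a b c d, hG.switch h hT1 ha hb hc hd, h.lt_egirth_switch hT,
    h.shortEdges_switch_ssubset hT hab⟩

theorem exists_add_one_lt_egirth [Finite V] (hG : IsRealization s t f G) (hpos : ∀ v, f v ≠ 0)
    (hΔ : ∀ v, f v ≤ Δ) (hcard : (2 * (Δ + 1) ^ (T + 1) : ℕ) < ENat.card V) (hT : T < G.egirth) :
    ∃ H, IsRealization s t f H ∧ (T + 1 : ℕ) < H.egirth := by
  induction hS : shortEdges G T using WellFoundedLT.induction generalizing G with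
  | _ S ih =>
    subst hS
    by_cases hshort : (shortEdges G T).Nonempty
    · obtain ⟨H, hH, hHT, hlt⟩ := hG.exists_shortEdges_ssubset hpos hΔ hcard hT hshort
      exact ih _ hlt hH hHT rfl
    · refine ⟨G, hG, natCast_lt_egirth_iff.2 fun u v huv ↦ ?_⟩
      rw [Nat.cast_add_one, ENat.add_one_le_iff (ENat.natCast_ne_top T)]
      exact not_le.1 fun hle ↦ hshort ⟨(u, v), huv, hle⟩

theorem exists_lt_egirth [Finite V] (hG : IsRealization s t f G) (hpos : ∀ v, f v ≠ 0)
    (hΔ : ∀ v, f v ≤ Δ) (hcard : (2 * (Δ + 1) ^ T : ℕ) < ENat.card V) :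
    ∃ H, IsRealization s t f H ∧ T < H.egirth := by
  induction T with
  | zero => exact ⟨G, hG, (by norm_num : (0 : ℕ∞) < 3).trans_le G.three_le_egirth⟩
  | succ T ih =>
    obtain ⟨H, hH, hT⟩ := ih (lt_of_le_of_lt (by gcongr <;> omega) hcard)
    exact hH.exists_add_one_lt_egirth hpos hΔ hcard hT

end IsRealization

end Existence

section Incidence

variable {A B ι : Type*}

theorem encard_fiber_snd (e : ι ≃ A × B) (b : B) : {i | (e i).2 = b}.encard = ENat.card A := by
  have hfiber : {i | (e i).2 = b} = Set.range fun a ↦ e.symm (a, b) := by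
    ext i
    constructor
    · rintro rfl
      exact ⟨(e i).1, e.symm_apply_apply i⟩
    · rintro ⟨a, rfl⟩
      simp
  rw [hfiber, ← Set.image_univ, Function.Injective.encard_image, Set.encard_univ]
  exact e.symm.injective.comp (Prod.mk_left_injective b)

theorem encard_setOf_exists_fiber {f : ι → A} {g : ι → B}
    (hinj : Function.Injective fun i ↦ (f i, g i)) (a : A) :
    {b | ∃ i, f i = a ∧ g i = b}.encard = {i | f i = a}.encard := by
  refine Set.InjOn.encard_image (f := g) fun i hi j hj hij ↦ hinj (Prod.ext (hi.trans hj.symm) hij)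

theorem exists_rel_encard_eq {d n m r : ℕ} (h : d * n = m * r) (hrn : r ≤ n) :
    ∃ R : Fin n → Fin m → Prop, (∀ a, {b | R a b}.encard = d) ∧ ∀ b, {a | R a b}.encard = r := by
  -- The `d * n` incidences are numbered so that `n` consecutive ones meet each vertex once and each
  -- hyperedge consists of `r ≤ n` consecutive ones.
  let residue : Fin (d * n) → Fin n := Fin.modNat
  let quotient : Fin (d * n) → Fin m := fun i ↦ (i.cast h).divNat
  have hinj : Function.Injective fun i ↦ (residue i, quotient i) := by
    intro i j hij
    obtain ⟨hmod, hdiv⟩ := Prod.ext_iff.1 hij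
    replace hmod : i % n = j % n := congrArg Fin.val hmod
    replace hdiv : i / r = j / r := congrArg Fin.val hdiv
    refine Fin.ext (Nat.ModEq.eq_of_abs_lt hmod ?_)
    have hr : 0 < r := Nat.pos_of_ne_zero fun hr ↦ (i.cast (by simp [h, hr])).elim0
    have hi := Nat.div_add_mod i r
    have hj := Nat.div_add_mod j r
    rw [hdiv] at hi
    have := Nat.mod_lt i hr
    have := Nat.mod_lt j hr
    rw [abs_lt]
    constructor <;> omega
  refine ⟨fun a b ↦ ∃ i, residue i = a ∧ quotient i = b, fun a ↦ ?_, fun b ↦ ?_⟩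
  · rw [encard_setOf_exists_fiber hinj]
    simpa using encard_fiber_snd finProdFinEquiv.symm a
  · simp only [and_comm (b := quotient _ = b)]
    rw [encard_setOf_exists_fiber (Prod.swap_injective.comp hinj)]
    simpa using encard_fiber_snd (((finCongr h).trans finProdFinEquiv.symm).trans (.prodComm ..)) b

/-- The bipartite graph on `A ⊕ B` whose edges are the pairs related by `R`. -/
def incidenceGraph (R : A → B → Prop) : SimpleGraph (A ⊕ B) where
  Adj
    | .inl a, .inr b => R a b
    | .inr b, .inl a => R a b
    | _, _ => False
  symm := ⟨by rintro (a | b) (a' | b') h <;> exact h⟩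
  loopless := ⟨by rintro (a | b) h <;> exact h⟩

theorem incidenceGraph_isBipartiteWith (R : A → B → Prop) :
    (incidenceGraph R).IsBipartiteWith (Set.range Sum.inl) (Set.range Sum.inr) := by
  refine ⟨Set.isCompl_range_inl_range_inr.disjoint, ?_⟩
  rintro (a | b) (a' | b') h <;> simp_all [incidenceGraph]

variable {G : SimpleGraph (A ⊕ B)}

theorem encard_neighborSet_inl (hG : G.IsBipartiteWith (Set.range Sum.inl) (Set.range Sum.inr))
    (a : A) : (G.neighborSet (.inl a)).encard = {b | G.Adj (.inl a) (.inr b)}.encard := by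
  rw [← Sum.inr_injective.encard_image {b | G.Adj (.inl a) (.inr b)}]
  congr 1
  ext (a' | b)
  · simpa using fun h ↦ by simpa using hG.mem_of_adj h
  · simp

theorem encard_neighborSet_inr (hG : G.IsBipartiteWith (Set.range Sum.inl) (Set.range Sum.inr))
    (b : B) : (G.neighborSet (.inr b)).encard = {a | G.Adj (.inl a) (.inr b)}.encard := by
  rw [← Sum.inl_injective.encard_image {a | G.Adj (.inl a) (.inr b)}]
  congr 1
  ext (a | b')
  · simp [G.adj_comm]
  · simpa using fun h ↦ by simpa using hG.mem_of_adj h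

theorem exists_biregular_lt_egirth {d r n m T : ℕ} (hd : d ≠ 0) (hr : r ≠ 0) (h : d * n = m * r)
    (hn : 2 * (d + r + 1) ^ T + r ≤ n) :
    ∃ H : SimpleGraph (Fin n ⊕ Fin m),
      IsRealization (Set.range Sum.inl) (Set.range Sum.inr) (Sum.elim (fun _ ↦ d) fun _ ↦ r) H ∧
        T < H.egirth := by
  obtain ⟨R, hR, hR'⟩ := exists_rel_encard_eq h (by omega)
  have hbip := incidenceGraph_isBipartiteWith R
  have hG : IsRealization (Set.range Sum.inl) (Set.range Sum.inr)
      (Sum.elim (fun _ ↦ (d : ℕ∞)) fun _ ↦ (r : ℕ∞)) (incidenceGraph R) := by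
    refine ⟨hbip, Sum.rec (fun a ↦ ?_) fun b ↦ ?_⟩
    · exact (encard_neighborSet_inl hbip a).trans (hR a)
    · exact (encard_neighborSet_inr hbip b).trans (hR' b)
  refine hG.exists_lt_egirth (Δ := d + r) ?_ ?_ ?_
  · simp [hd, hr]
  · simp
  · simp only [ENat.card_eq_coe_fintype_card, Fintype.card_sum, Fintype.card_fin]
    norm_cast
    omega

end Incidence

section Berge

variable {A B : Type*} {R : A → B → Prop} {G : SimpleGraph (A ⊕ B)} {k : ℕ} {x : ℕ → A} {E : ℕ → B}
  {a a' : A} {b b' : B}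

/-- A Berge cycle of length `k` in the hypergraph on `A` with hyperedges indexed by `B` and
incidence relation `R`. Only the values of `x` and `E` below `k` matter. -/
structure IsBergeCycle (R : A → B → Prop) (k : ℕ) (x : ℕ → A) (E : ℕ → B) : Prop where
  injOn_vertex : Set.InjOn x (Set.Iio k)
  injOn_edge : Set.InjOn E (Set.Iio k)
  incident : ∀ i < k, R (x i) (E i)
  incident_succ : ∀ i < k, R (x ((i + 1) % k)) (E i)

theorem isBergeCycle_two (ha : a ≠ a') (hb : b ≠ b') (hab : R a b) (hab' : R a b') (ha'b : R a' b)
    (ha'b' : R a' b') : IsBergeCycle R 2 (if · = 0 then a else a') (if · = 0 then b else b') := by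
  constructor
  · intro i hi j hj
    grind
  · intro i hi j hj
    grind
  · intro i _
    grind
  · intro i hi
    interval_cases i <;> simpa

theorem IsBergeCycle.egirth_le (h : IsBergeCycle (fun a b ↦ G.Adj (.inl a) (.inr b)) k x E)
    (hk : 2 ≤ k) : G.egirth ≤ (2 * k : ℕ) := by
  set K := G \ edge (.inl (x 0)) (.inr (E 0))
  have hK {a b} (hadj : G.Adj (.inl a) (.inr b)) (hne : a ≠ x 0 ∨ b ≠ E 0) :
      K.Adj (.inl a) (.inr b) := by
    refine ⟨hadj, fun he ↦ ?_⟩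
    rw [edge_adj] at he
    grind
  have hpath : ∀ i < k, K.edist (.inr (E i)) (.inr (E 0)) ≤ (2 * i : ℕ) := by
    intro i hi
    induction i with
    | zero => simp
    | succ i ih =>
      have hx : x (i + 1) ≠ x 0 := fun hx ↦ by
        have := h.injOn_vertex hi (Set.mem_Iio.2 (by omega)) hx
        omega
      have hback := h.incident_succ i (by omega)
      rw [Nat.mod_eq_of_lt hi] at hback
      calc K.edist (.inr (E (i + 1))) (.inr (E 0))
          ≤ K.edist (.inl (x (i + 1))) (.inr (E 0)) + 1 :=
            edist_le_edist_add_one (hK (h.incident _ hi) (.inl hx)).symm _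
        _ ≤ K.edist (.inr (E i)) (.inr (E 0)) + 1 + 1 := by
            grw [edist_le_edist_add_one (hK hback (.inl hx))]
        _ ≤ (2 * (i + 1) : ℕ) := by
            grw [ih (by omega)]
            norm_cast
  have hclose : G.Adj (.inl (x 0)) (.inr (E (k - 1))) := by
    simpa [Nat.sub_add_cancel (by omega : 1 ≤ k)] using h.incident_succ (k - 1) (by omega)
  have hE : E (k - 1) ≠ E 0 := fun hE ↦ by
    have := h.injOn_edge (Set.mem_Iio.2 (by omega)) (Set.mem_Iio.2 (by omega)) hE
    omega
  calc G.egirth ≤ detour G (.inl (x 0)) (.inr (E 0)) + 1 :=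
        egirth_le_detour_add_one (h.incident 0 (by omega))
    _ ≤ K.edist (.inr (E (k - 1))) (.inr (E 0)) + 1 + 1 := by
        grw [detour, edist_le_edist_add_one (hK hclose (.inr hE))]
    _ ≤ (2 * k : ℕ) := by
        grw [hpath (k - 1) (by omega)]
        norm_cast
        omega

end Berge

section Block

variable {A B : Type*} [Fintype A] {G : SimpleGraph (A ⊕ B)} {a : A} {b b' : B}

open Classical in
/-- The hyperedge on `A` given by the neighbours of `b ∈ B`, when `G` is viewed as the incidence
graph of a hypergraph on `A` with hyperedges indexed by `B`. -/
noncomputable def block (G : SimpleGraph (A ⊕ B)) (b : B) : Finset A :=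
  {a | G.Adj (.inl a) (.inr b)}

theorem mem_block : a ∈ block G b ↔ G.Adj (.inl a) (.inr b) := by
  simp [block]

theorem card_block (hG : G.IsBipartiteWith (Set.range Sum.inl) (Set.range Sum.inr)) (b : B) :
    (#(block G b) : ℕ∞) = (G.neighborSet (.inr b)).encard := by
  rw [encard_neighborSet_inr hG, ← Set.encard_coe_eq_coe_finsetCard]
  simp only [block, coe_filter_univ]

theorem card_filter_mem_image_block [DecidableEq A] [Fintype B]
    (hG : G.IsBipartiteWith (Set.range Sum.inl) (Set.range Sum.inr))
    (hinj : Function.Injective (block G)) (a : A) :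
    (#{F ∈ univ.image (block G) | a ∈ F} : ℕ∞) = (G.neighborSet (.inl a)).encard := by
  rw [filter_image, card_image_of_injective _ hinj, encard_neighborSet_inl hG,
    ← Set.encard_coe_eq_coe_finsetCard]
  simp [mem_block]

theorem card_block_inter_block_le_one [DecidableEq A] (hG : 4 < G.egirth) (hb : b ≠ b') :
    #(block G b ∩ block G b') ≤ 1 := by
  refine card_le_one.2 fun a ha a' ha' ↦ by_contra fun hne ↦ hG.not_ge ?_
  simp only [mem_inter, mem_block] at ha ha'
  exact (isBergeCycle_two hne hb ha.1 ha.2 ha'.1 ha'.2).egirth_le le_rfl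

theorem block_injective (hG : 4 < G.egirth) (hcard : ∀ b, 2 ≤ #(block G b)) :
    Function.Injective (block G) := by
  classical
  intro b b' hbb'
  by_contra hne
  have hle := card_block_inter_block_le_one hG hne
  rw [← hbb', inter_self] at hle
  exact absurd (hcard b) (by omega)

theorem not_isBergeCycle_image_block [DecidableEq A] [Fintype B] {k : ℕ} (hk : 2 ≤ k)
    (hG : (2 * k : ℕ) < G.egirth) (x : ℕ → A) (E : ℕ → Finset A)
    (hE : ∀ i < k, E i ∈ univ.image (block G)) : ¬ IsBergeCycle (· ∈ ·) k x E := by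
  intro h
  simp only [mem_image, mem_univ, true_and] at hE
  obtain ⟨b₀, -⟩ := hE 0 (by omega)
  have : Nonempty B := ⟨b₀⟩
  choose! b hb using hE
  refine hG.not_ge (IsBergeCycle.egirth_le (x := x) (E := b) ⟨h.injOn_vertex, ?_, ?_, ?_⟩ hk)
  · exact fun i hi j hj hij ↦ h.injOn_edge hi hj (by rw [← hb i hi, ← hb j hj, hij])
  · exact fun i hi ↦ mem_block.1 (hb i hi ▸ h.incident i hi)
  · exact fun i hi ↦ mem_block.1 (hb i hi ▸ h.incident_succ i hi)

end Block

end BergeGirth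

open BergeGirth in
theorem exists_linear_regular_uniform_large_girth_general (d r g : ℕ) (hd : 1 ≤ d) (hr : 2 ≤ r) :
    ∃ N : ℕ, ∀ n : ℕ, N ≤ n → r ∣ d * n →
      ∃ 𝓕 : Finset (Finset (Fin n)),
        (∀ F ∈ 𝓕, F.card = r) ∧
        (∀ x : Fin n, (𝓕.filter (fun F => x ∈ F)).card = d) ∧
        (∀ F ∈ 𝓕, ∀ G ∈ 𝓕, F ≠ G → (F ∩ G).card ≤ 1) ∧
        (∀ k : ℕ, 2 ≤ k → k ≤ g - 1 →
          ¬ ∃ (E : ℕ → Finset (Fin n)) (x : ℕ → Fin n),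
            (∀ i < k, E i ∈ 𝓕) ∧
            (∀ i < k, ∀ j < k, E i = E j → i = j) ∧
            (∀ i < k, ∀ j < k, x i = x j → i = j) ∧
            (∀ i < k, x i ∈ E i ∧ x ((i + 1) % k) ∈ E i)) := by
  refine ⟨2 * (d + r + 1) ^ (2 * (g + 2)) + r, fun n hn ⟨m, hm⟩ ↦ ?_⟩
  rw [mul_comm r] at hm
  obtain ⟨H, hH, hgirth⟩ := exists_biregular_lt_egirth (by omega) (by omega) hm hn
  have hlt {k : ℕ} (hk : k ≤ 2 * (g + 2)) : k < H.egirth := hgirth.trans_le' (mod_cast hk)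
  have hcard (b : Fin m) : #(block H b) = r :=
    ENat.natCast_inj.1 ((card_block hH.isBipartiteWith b).trans (hH.encard_neighborSet _))
  have hgirth4 : 4 < H.egirth := hlt (k := 4) (by omega)
  have hinj := block_injective hgirth4 fun b ↦ hr.trans (hcard b).ge
  refine ⟨univ.image (block H), by simpa using hcard, fun x ↦ ?_, ?_, ?_⟩
  · exact ENat.natCast_inj.1 ((card_filter_mem_image_block hH.isBipartiteWith hinj x).trans
      (hH.encard_neighborSet _))
  · simp only [forall_mem_image, mem_univ, true_imp_iff]
    exact fun b b' hne ↦ card_block_inter_block_le_one hgirth4 (mt (congrArg _) hne)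
  · rintro k hk hkg ⟨E, x, hE, hE_inj, hx_inj, hinc⟩
    exact not_isBergeCycle_image_block hk (hlt (by omega)) x E hE ⟨hx_inj, hE_inj,
      fun i hi ↦ (hinc i hi).1, fun i hi ↦ (hinc i hi).2⟩

/-- for all `d ≥ 2` and `r, g ≥ 3` there is `N` such that for every `n ≥ N`
with `r ∣ d·n` there is an `r`-uniform, `d`-regular, linear family of subsets of `[n]` with
Berge-girth at least `g` (no Berge cycle of length `k` for any `2 ≤ k ≤ g-1`). -/
theorem exists_linear_regular_uniform_large_girth (d r g : ℕ) (hd : 2 ≤ d) (hr : 3 ≤ r)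
    (hg : 3 ≤ g) :
    ∃ N : ℕ, ∀ n : ℕ, N ≤ n → r ∣ d * n →
      ∃ 𝓕 : Finset (Finset (Fin n)),
        (∀ F ∈ 𝓕, F.card = r) ∧
        (∀ x : Fin n, (𝓕.filter (fun F => x ∈ F)).card = d) ∧
        (∀ F ∈ 𝓕, ∀ G ∈ 𝓕, F ≠ G → (F ∩ G).card ≤ 1) ∧
        (∀ k : ℕ, 2 ≤ k → k ≤ g - 1 →
          ¬ ∃ (E : ℕ → Finset (Fin n)) (x : ℕ → Fin n),
            (∀ i < k, E i ∈ 𝓕) ∧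
            (∀ i < k, ∀ j < k, E i = E j → i = j) ∧
            (∀ i < k, ∀ j < k, x i = x j → i = j) ∧
            (∀ i < k, x i ∈ E i ∧ x ((i + 1) % k) ∈ E i)) :=
  exists_linear_regular_uniform_large_girth_general d r g (by omega) (by omega)
end
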